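/- arXiv:2404.07393 — 2 statements merged into one kernel-verified Lean document; each statement's English description precedes it below -/
import Mathlib

section
/- Let c ≥ 1, α ≥ 2, β = α + 1, and let λ = (λ_1, …, λ_α, c^β, λ_{α+β+1}, …) be a partition of n with λ_{α+β+1} < c < λ_α. Let μ = (λ_1, …, λ_α, c+1, c^{β−2}, c−1, λ_{α+β+1}, …). Then K_{λ,ν} ≤ K_{μ,ν} for every partition ν of n; in particular λ ≤_I μ in the immersion poset. -/
open Finset MvPolynomial

/-- A partition of `n`, represented as a weakly decreasing list of positive
integers summing to `n`. -/
def IsPartitionOf (n : ℕ) (l : List ℕ) : Prop :=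
  l.Pairwise (· ≥ ·) ∧ (∀ x ∈ l, 0 < x) ∧ l.sum = n

/-- `T : ℕ → ℕ → ℕ` is a semistandard Young tableau of shape `l`
(rows weakly increase, columns strictly increase, entries are `0` outside
of the diagram; entries are 0-indexed, so entry value `k` stands for the
letter `k+1`). -/
def IsSSYT (l : List ℕ) (T : ℕ → ℕ → ℕ) : Prop :=
  (∀ i j1 j2, j1 ≤ j2 → j2 < l.getD i 0 → T i j1 ≤ T i j2) ∧
  (∀ i1 i2 j, i1 < i2 → j < l.getD i2 0 → T i1 j < T i2 j) ∧
  (∀ i j, l.getD i 0 ≤ j → T i j = 0)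

/-- The tableau `T` of shape `l` has content `ν`: for every `k`, the number of
cells of the diagram of `l` whose entry is `k` equals the `(k+1)`-st part of `ν`. -/
def HasContent (l : List ℕ) (T : ℕ → ℕ → ℕ) (ν : List ℕ) : Prop :=
  ∀ k, Nat.card {c : ℕ × ℕ // c.2 < l.getD c.1 0 ∧ T c.1 c.2 = k} = ν.getD k 0

/-- The Kostka number `K_{l,ν}`: the number of semistandard Young tableaux of
shape `l` and content `ν`. -/
noncomputable def kostka (l ν : List ℕ) : ℕ :=
  Nat.card {T : ℕ → ℕ → ℕ // IsSSYT l T ∧ HasContent l T ν}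

/-- `f^λ`, the number of standard Young tableaux of shape `l`. -/
noncomputable def fSYT (l : List ℕ) : ℕ := kostka l (List.replicate l.sum 1)

/-- Dominance order: all partial sums of `l` are at most those of `m`. -/
def DomLE (l m : List ℕ) : Prop := ∀ k, (l.take k).sum ≤ (m.take k).sum

/-- The standard immersion order: dominance together with `f^λ ≤ f^μ`. -/
def StdLE (l m : List ℕ) : Prop := DomLE l m ∧ fSYT l ≤ fSYT m

/-- Strict standard immersion order. -/
def StdLT (l m : List ℕ) : Prop := StdLE l m ∧ l ≠ m

/-- `m` covers `l` in the standard immersion poset on partitions of `n`. -/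
def StdCovBy (n : ℕ) (l m : List ℕ) : Prop :=
  StdLT l m ∧ ∀ ν, IsPartitionOf n ν → StdLT l ν → ¬ StdLT ν m

/-- `l` is a maximal element of the standard immersion poset on partitions of `n`. -/
def StdMaximal (n : ℕ) (l : List ℕ) : Prop :=
  ∀ m, IsPartitionOf n m → m ≠ l → ¬ StdLE l m

/-- The immersion order on partitions of `n`: `l ≤_I m` iff
`K_{l,α} ≤ K_{m,α}` for every partition `α` of `n`. -/
def ImmersionLE (n : ℕ) (l m : List ℕ) : Prop :=
  ∀ ν, IsPartitionOf n ν → kostka l ν ≤ kostka m ν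

/-- Strict immersion order. -/
def ImmersionLT (n : ℕ) (l m : List ℕ) : Prop := ImmersionLE n l m ∧ l ≠ m

/-- `m` covers `l` in the immersion poset on partitions of `n`. -/
def ImmersionCovBy (n : ℕ) (l m : List ℕ) : Prop :=
  ImmersionLT n l m ∧ ∀ ν, IsPartitionOf n ν → ImmersionLT n l ν → ¬ ImmersionLT n ν m

/-- The partition `μ` obtained from `λ = pre ++ c^β ++ suf` by moving one box
from the last row of the block of rows of length `c` to the first row of that
block (the part `c - 1` is dropped when it equals zero). -/
def movedShape (c β : ℕ) (pre suf : List ℕ) : List ℕ :=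
  pre ++ (c + 1) :: (List.replicate (β - 2) c ++ ((c - 1) :: suf).filter (fun x => x ≠ 0))

/-!
A tableau is determined by the sets of entries of its columns, and passing from `λ` to `μ` moves one
cell from column `c` to column `c + 1`. It therefore suffices to move, injectively, one entry from a
column `X` of height `α + β` to the next column `Y` of height `α`, keeping `X`, `Y` semistandard:
the neighbouring columns then remain compatible, since `X` only shrinks and `Y` only grows.

Entries common to `X` and `Y` play no role, so one works inside `U = X ∆ Y`, where `Y \ X` is a
"ballot" subset with `k ≤ α` of the `2 * k + β` elements, and has to be injectively enlarged by one
element to another ballot subset. By Hall's theorem such a matching exists as soon as every family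
of ballot `k`-subsets has at least as many ballot supersets of size `k + 1` as members. Induction on
the largest element of `U` gives the sharp estimate, in which the ratio is that of the total numbers
of ballot subsets of the two sizes; this ratio is at least `1` when `2 * k + β + 2 ≤ β ^ 2`, which
for `k ≤ α` and `β = α + 1` amounts to `α ≥ 2`.
-/

section ColumnOrder

variable {α : Type*} [LinearOrder α] {X Y X' Y' : Finset α} {m x : α}

/-- The column `X` may stand immediately to the left of the column `Y` in a semistandard tableau,
columns being identified with their sets of entries: the `i`-th smallest entry of `Y` exists only
if that of `X` does, and is at least as large. This is encoded by counting the entries up to each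
bound, see `columnLE_iff_nthEntry`. -/
def ColumnLE (X Y : Finset α) : Prop :=
  ∀ x, #{y ∈ Y | y ≤ x} ≤ #{y ∈ X | y ≤ x}

theorem ColumnLE.mono (h : ColumnLE X Y) (hX : X ⊆ X') (hY : Y' ⊆ Y) : ColumnLE X' Y' := fun x =>
  (card_le_card (filter_subset_filter _ hY)).trans
    ((h x).trans (card_le_card (filter_subset_filter _ hX)))

theorem ColumnLE.card_le (h : ColumnLE X Y) : #Y ≤ #X := by
  rcases Y.eq_empty_or_nonempty with rfl | hY
  · simp
  · have hmax := h (Y.max' hY)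
    rw [filter_true_of_mem fun y hy => Y.le_max' y hy] at hmax
    exact hmax.trans (card_filter_le _ _)

theorem columnLE_sdiff_sdiff_iff : ColumnLE (X \ Y) (Y \ X) ↔ ColumnLE X Y := by
  refine forall_congr' fun x => ?_
  have filter_sdiff (S T : Finset α) :
      {y ∈ S \ T | y ≤ x} = {y ∈ S | y ≤ x} \ {y ∈ T | y ≤ x} := by grind
  rw [filter_sdiff, filter_sdiff, card_sdiff_le_card_sdiff_iff]

theorem columnLE_iff_of_le (hX : ∀ y ∈ X, y ≤ m) (hY : ∀ y ∈ Y, y ≤ m) :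
    ColumnLE X Y ↔ #Y ≤ #X ∧ ∀ x < m, #{y ∈ Y | y ≤ x} ≤ #{y ∈ X | y ≤ x} := by
  refine ⟨fun h => ⟨h.card_le, fun x _ => h x⟩, fun ⟨hcard, h⟩ x => ?_⟩
  rcases lt_or_ge x m with hx | hx
  · exact h x hx
  · rwa [filter_true_of_mem fun y hy => (hX y hy).trans hx,
      filter_true_of_mem fun y hy => (hY y hy).trans hx]

theorem filter_le_insert_of_lt (h : x < m) : {y ∈ insert m X | y ≤ x} = {y ∈ X | y ≤ x} := by
  rw [filter_insert, if_neg h.not_ge]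

theorem columnLE_insert_left_iff (hX : ∀ y ∈ X, y < m) (hY : ∀ y ∈ Y, y < m) (hcard : #Y ≤ #X) :
    ColumnLE (insert m X) Y ↔ ColumnLE X Y := by
  rw [columnLE_iff_of_le (m := m) (by grind) (by grind),
    columnLE_iff_of_le (m := m) (by grind) (by grind)]
  refine and_congr ?_ (forall₂_congr fun x hx => by rw [filter_le_insert_of_lt hx])
  exact iff_of_true (hcard.trans (card_le_card (subset_insert _ _))) hcard

theorem columnLE_insert_right_iff (hX : ∀ y ∈ X, y < m) (hY : ∀ y ∈ Y, y < m) (hcard : #Y < #X) :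
    ColumnLE X (insert m Y) ↔ ColumnLE X Y := by
  rw [columnLE_iff_of_le (m := m) (by grind) (by grind),
    columnLE_iff_of_le (m := m) (by grind) (by grind)]
  refine and_congr ?_ (forall₂_congr fun x hx => by rw [filter_le_insert_of_lt hx])
  exact iff_of_true ((card_insert_le _ _).trans hcard) hcard.le

end ColumnOrder

section BallotSubsets

variable {α : Type*} [LinearOrder α] {U S : Finset α} {𝒜 : Finset (Finset α)} {m : α} {k b : ℕ}

open Classical in
/-- The `k`-element subsets `S` of `U` such that `U \ S` and `S` are the columns of a two-column
semistandard tableau; reading `U` in increasing order and recording membership in `S` gives a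
ballot sequence. -/
noncomputable def ballotSubsets (U : Finset α) (k : ℕ) : Finset (Finset α) :=
  {S ∈ U.powersetCard k | ColumnLE (U \ S) S}

/-- The ballot subsets of `U` with `k + 1` elements that contain a member of `𝒜`; for a family `𝒜`
of `k`-element sets this is its upper shadow within the ballot subsets. -/
noncomputable def ballotShadow (U : Finset α) (k : ℕ) (𝒜 : Finset (Finset α)) :
    Finset (Finset α) :=
  {Q ∈ ballotSubsets U (k + 1) | ∃ P ∈ 𝒜, P ⊆ Q}

theorem mem_ballotSubsets :
    S ∈ ballotSubsets U k ↔ S ⊆ U ∧ #S = k ∧ ColumnLE (U \ S) S := by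
  simp only [ballotSubsets, mem_filter, mem_powersetCard, and_assoc]

theorem mem_ballotShadow {Q : Finset α} :
    Q ∈ ballotShadow U k 𝒜 ↔ Q ∈ ballotSubsets U (k + 1) ∧ ∃ P ∈ 𝒜, P ⊆ Q := by
  rw [ballotShadow, mem_filter]

theorem ballotSubsets_mono {V : Finset α} (hUV : U ⊆ V) :
    ballotSubsets U k ⊆ ballotSubsets V k := fun _ hS =>
  let ⟨hSU, hcard, hcol⟩ := mem_ballotSubsets.1 hS
  mem_ballotSubsets.2
    ⟨hSU.trans hUV, hcard, hcol.mono (sdiff_subset_sdiff hUV Subset.rfl) Subset.rfl⟩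

theorem mem_ballotSubsets_insert_iff (hm : ∀ u ∈ U, u < m) (hS : m ∉ S) (hk : 2 * k ≤ #U) :
    S ∈ ballotSubsets (insert m U) k ↔ S ∈ ballotSubsets U k := by
  simp only [mem_ballotSubsets, subset_insert_iff_of_notMem hS]
  refine and_congr_right fun hSU => and_congr_right fun hcard => ?_
  rw [insert_sdiff_of_notMem _ hS]
  have := card_sdiff_of_subset hSU
  exact columnLE_insert_left_iff (by grind) (by grind) (by omega)

theorem insert_mem_ballotSubsets_insert_iff (hm : ∀ u ∈ U, u < m) (hS : m ∉ S)
    (hk : 2 * k + 1 ≤ #U) :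
    insert m S ∈ ballotSubsets (insert m U) (k + 1) ↔ S ∈ ballotSubsets U k := by
  simp only [mem_ballotSubsets, insert_subset_insert_iff hS, card_insert_of_notMem hS,
    Nat.add_right_cancel_iff]
  refine and_congr_right fun hSU => and_congr_right fun hcard => ?_
  rw [show insert m U \ insert m S = U \ S by grind]
  have := card_sdiff_of_subset hSU
  exact columnLE_insert_right_iff (by grind) (by grind) (by omega)

theorem nonMemberSubfamily_subset_ballotSubsets (hm : ∀ u ∈ U, u < m) (hk : 2 * k ≤ #U)
    (h𝒜 : 𝒜 ⊆ ballotSubsets (insert m U) k) :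
    𝒜.nonMemberSubfamily m ⊆ ballotSubsets U k := by
  intro S hS
  obtain ⟨hS𝒜, hmS⟩ := mem_nonMemberSubfamily.1 hS
  exact (mem_ballotSubsets_insert_iff hm hmS hk).1 (h𝒜 hS𝒜)

theorem memberSubfamily_subset_ballotSubsets (hm : ∀ u ∈ U, u < m) (hk : 2 * k + 1 ≤ #U)
    (h𝒜 : 𝒜 ⊆ ballotSubsets (insert m U) (k + 1)) :
    𝒜.memberSubfamily m ⊆ ballotSubsets U k := by
  intro S hS
  obtain ⟨hS𝒜, hmS⟩ := mem_memberSubfamily.1 hS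
  exact (insert_mem_ballotSubsets_insert_iff hm hmS hk).1 (h𝒜 hS𝒜)

theorem notMem_of_mem_ballotSubsets (hm : ∀ u ∈ U, u < m) (hS : S ∈ ballotSubsets U k) : m ∉ S :=
  fun hmS => (hm m ((mem_ballotSubsets.1 hS).1 hmS)).false

theorem ballotShadow_subset_nonMemberSubfamily (hm : ∀ u ∈ U, u < m) :
    ballotShadow U k (𝒜.nonMemberSubfamily m) ⊆
      (ballotShadow (insert m U) k 𝒜).nonMemberSubfamily m := by
  intro Q hQ
  obtain ⟨hQU, P, hP, hPQ⟩ := mem_ballotShadow.1 hQ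
  have hmQ := notMem_of_mem_ballotSubsets hm hQU
  exact mem_nonMemberSubfamily.2 ⟨mem_ballotShadow.2
    ⟨ballotSubsets_mono (subset_insert m U) hQU, P, (mem_nonMemberSubfamily.1 hP).1, hPQ⟩, hmQ⟩

theorem ballotShadow_subset_memberSubfamily (hm : ∀ u ∈ U, u < m) (hk : 2 * k + 3 ≤ #U) :
    ballotShadow U k (𝒜.memberSubfamily m) ⊆
      (ballotShadow (insert m U) (k + 1) 𝒜).memberSubfamily m := by
  intro Q hQ
  obtain ⟨hQU, P, hP, hPQ⟩ := mem_ballotShadow.1 hQ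
  have hmQ := notMem_of_mem_ballotSubsets hm hQU
  exact mem_memberSubfamily.2 ⟨mem_ballotShadow.2
    ⟨(insert_mem_ballotSubsets_insert_iff hm hmQ hk).2 hQU, insert m P,
      (mem_memberSubfamily.1 hP).1, insert_subset_insert m hPQ⟩, hmQ⟩

theorem nonMemberSubfamily_subset_memberSubfamily_ballotShadow (hm : ∀ u ∈ U, u < m)
    (hk : 2 * k + 1 ≤ #U) (h𝒜 : 𝒜 ⊆ ballotSubsets (insert m U) k) :
    𝒜.nonMemberSubfamily m ⊆ (ballotShadow (insert m U) k 𝒜).memberSubfamily m := by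
  intro S hS
  have hSU := nonMemberSubfamily_subset_ballotSubsets hm (by omega) h𝒜 hS
  obtain ⟨hS𝒜, hmS⟩ := mem_nonMemberSubfamily.1 hS
  exact mem_memberSubfamily.2 ⟨mem_ballotShadow.2
    ⟨(insert_mem_ballotSubsets_insert_iff hm hmS hk).2 hSU, S, hS𝒜, subset_insert m S⟩, hmS⟩

/-- The inductive step of `mul_card_le_mul_card_ballotShadow`: `a₀` and `a₁` count the members of a
family without and with the largest element, `s₀` and `s₁` the shadows of these two subfamilies, and
`t` the members of the shadow with the largest element, which absorb both `a₀` and `s₁`. -/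
theorem expansion_combine {a₀ a₁ s₀ s₁ t : ℕ}
    (h₀ : b * (k + b + 2) * a₀ ≤ (b + 2) * (k + 1) * s₀)
    (h₁ : (b + 2) * (k + b + 3) * a₁ ≤ (b + 4) * k * s₁) (ha₀ : a₀ ≤ t) (hs₁ : s₁ ≤ t) :
    (b + 1) * (k + b + 3) * (a₁ + a₀) ≤ (b + 3) * (k + 1) * (t + s₀) := by
  refine Nat.le_of_mul_le_mul_left ?_ (Nat.succ_pos (b + 1))
  have e₀ := Nat.mul_le_mul_left (b + 3) h₀
  have e₁ := Nat.mul_le_mul_left (b + 1) h₁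
  have e₂ := Nat.mul_le_mul_left (2 * k + (b + 2) * (b + 3)) ha₀
  have e₃ := Nat.mul_le_mul_left ((b + 1) * (b + 4) * k) hs₁
  linarith

/-- The quotient of the two coefficients is that of the numbers of ballot subsets with `k + 1` and
with `k` elements, so the density of a family does not decrease when passing to its shadow. -/
theorem mul_card_le_mul_card_ballotShadow (hU : #U = 2 * k + b + 1) (h𝒜 : 𝒜 ⊆ ballotSubsets U k) :
    b * (k + b + 2) * #𝒜 ≤ (b + 2) * (k + 1) * #(ballotShadow U k 𝒜) := by
  induction U using Finset.induction_on_max generalizing k b 𝒜 with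
  | empty => simp at hU
  | insert m U hm ih =>
    rw [card_insert_of_notMem fun hmU => (hm m hmU).false] at hU
    rcases b with _ | b
    · simp
    have h₀ := ih (k := k) (b := b) (by omega)
      (nonMemberSubfamily_subset_ballotSubsets hm (by omega) h𝒜)
    have h₁ : ∃ s ≤ #((ballotShadow (insert m U) k 𝒜).memberSubfamily m),
        (b + 2) * (k + b + 3) * #(𝒜.memberSubfamily m) ≤ (b + 4) * k * s := by
      rcases k with _ | k
      · refine ⟨0, Nat.zero_le _, ?_⟩
        have : 𝒜.memberSubfamily m = ∅ := by
          refine eq_empty_of_forall_notMem fun S hS => ?_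
          have hcard := (mem_ballotSubsets.1 (h𝒜 (mem_memberSubfamily.1 hS).1)).2.1
          exact insert_ne_empty _ _ (card_eq_zero.1 hcard)
        simp [this]
      · refine ⟨_, card_le_card (ballotShadow_subset_memberSubfamily hm (by omega)), ?_⟩
        have := ih (k := k) (b := b + 2) (by omega)
          (memberSubfamily_subset_ballotSubsets hm (by omega) h𝒜)
        convert this using 2; ring
    obtain ⟨s, hs, h₁⟩ := h₁
    rw [← card_memberSubfamily_add_card_nonMemberSubfamily m 𝒜,
      ← card_memberSubfamily_add_card_nonMemberSubfamily m (ballotShadow _ _ _)]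
    refine (expansion_combine h₀ h₁ (card_le_card
      (nonMemberSubfamily_subset_memberSubfamily_ballotShadow hm (by omega) h𝒜)) hs).trans ?_
    gcongr
    exact ballotShadow_subset_nonMemberSubfamily hm

theorem card_le_card_ballotShadow {β : ℕ} (hU : #U = 2 * k + β) (hk : 2 * k + β + 2 ≤ β ^ 2)
    (h𝒜 : 𝒜 ⊆ ballotSubsets U k) : #𝒜 ≤ #(ballotShadow U k 𝒜) := by
  obtain ⟨b, rfl⟩ : ∃ b, β = b + 1 := Nat.exists_eq_succ_of_ne_zero (by rintro rfl; simp at hk)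
  have hexp := mul_card_le_mul_card_ballotShadow (b := b) hU h𝒜
  have hcoef : (b + 2) * (k + 1) ≤ b * (k + b + 2) := by linarith
  exact Nat.le_of_mul_le_mul_left ((Nat.mul_le_mul_right _ hcoef).trans hexp) (by positivity)

theorem exists_injOn_insert_ballotSubsets [Nonempty α] {β : ℕ} (hU : #U = 2 * k + β)
    (hk : 2 * k + β + 2 ≤ β ^ 2) :
    ∃ e : Finset α → α,
      (∀ S ∈ ballotSubsets U k, e S ∉ S ∧ insert (e S) S ∈ ballotSubsets U (k + 1)) ∧
      Set.InjOn (fun S => insert (e S) S) (ballotSubsets U k) := by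
  have hall (s : Finset (ballotSubsets U k)) :
      #s ≤ #(s.biUnion fun P => ballotShadow U k {P.1}) := by
    rw [← card_map (Function.Embedding.subtype _)]
    refine (card_le_card_ballotShadow hU hk ?_).trans (card_le_card ?_)
    · grind [Function.Embedding.subtype_apply]
    · intro Q hQ
      simp only [mem_biUnion, mem_ballotShadow, mem_map, mem_singleton] at hQ ⊢
      grind [Function.Embedding.subtype_apply]
  obtain ⟨f, hf_inj, hf⟩ := (all_card_le_biUnion_card_iff_exists_injective _).1 hall
  have hinsert (P : ballotSubsets U k) : ∃ x ∉ P.1, insert x P.1 = f P := by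
    obtain ⟨hfP, P', hP', hsub⟩ := mem_ballotShadow.1 (hf P)
    rw [mem_singleton.1 hP'] at hsub
    refine exists_eq_insert_iff.2 ⟨hsub, ?_⟩
    rw [(mem_ballotSubsets.1 P.2).2.1, (mem_ballotSubsets.1 hfP).2.1]
  choose! e he using fun (S : Finset α) (hS : S ∈ ballotSubsets U k) => hinsert ⟨S, hS⟩
  refine ⟨e, fun S hS => ⟨(he S hS).1, ?_⟩, fun S hS S' hS' heq => ?_⟩
  · rw [(he S hS).2]
    exact (mem_ballotShadow.1 (hf _)).1
  · dsimp only at heq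
    rw [(he S hS).2, (he S' hS').2] at heq
    exact congrArg Subtype.val (hf_inj heq)

end BallotSubsets

section MovableEntry

variable {α : Type*} [LinearOrder α] {X Y : Finset α} {p : Finset α × Finset α} {x : α}
  {k b β : ℕ}

/-- The pairs of columns of heights `a` and `b` that may stand next to each other in a semistandard
tableau. -/
def columnPairs (α : Type*) [LinearOrder α] (a b : ℕ) : Set (Finset α × Finset α) :=
  {p | #p.1 = a ∧ #p.2 = b ∧ ColumnLE p.1 p.2}

/-- Move the entry `x` of the left column to the right column. -/
def moveEntry (x : α) (p : Finset α × Finset α) : Finset α × Finset α :=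
  (p.1.erase x, insert x p.2)

theorem symmDiff_moveEntry (hx : x ∈ p.1 \ p.2) :
    symmDiff (moveEntry x p).1 (moveEntry x p).2 = symmDiff p.1 p.2 := by
  grind [moveEntry, mem_symmDiff]

theorem sdiff_moveEntry :
    (moveEntry x p).2 \ (moveEntry x p).1 = insert x (p.2 \ p.1) := by
  grind [moveEntry]

theorem moveEntry_injOn : Set.InjOn (moveEntry x) {p | x ∈ p.1 \ p.2} := by
  intro p hp q hq h
  obtain ⟨hp₁, hp₂⟩ := mem_sdiff.1 hp
  obtain ⟨hq₁, hq₂⟩ := mem_sdiff.1 hq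
  obtain ⟨h₁, h₂⟩ : p.1.erase x = q.1.erase x ∧ insert x p.2 = insert x q.2 := Prod.ext_iff.1 h
  exact Prod.ext (by rw [← insert_erase hp₁, ← insert_erase hq₁, h₁])
    (by rw [← erase_insert hp₂, ← erase_insert hq₂, h₂])

theorem symmDiff_sdiff_sdiff : symmDiff X Y \ (Y \ X) = X \ Y := by
  grind [mem_symmDiff]

theorem sdiff_mem_ballotSubsets_symmDiff_iff :
    Y \ X ∈ ballotSubsets (symmDiff X Y) k ↔ #(Y \ X) = k ∧ ColumnLE X Y := by
  rw [mem_ballotSubsets, symmDiff_sdiff_sdiff, columnLE_sdiff_sdiff_iff]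
  exact and_iff_right le_sup_right

theorem card_symmDiff_of_card_eq_add (h : #X = #Y + β) :
    #(symmDiff X Y) = 2 * #(Y \ X) + β := by
  have hX := card_sdiff_add_card_inter X Y
  have hY := card_sdiff_add_card_inter Y X
  rw [inter_comm] at hY
  rw [symmDiff_def, sup_eq_union, card_union_of_disjoint disjoint_sdiff_sdiff]
  omega

theorem exists_injOn_moveEntry [Nonempty α] (hb : 2 * b + β + 2 ≤ β ^ 2) :
    ∃ e : Finset α × Finset α → α,
      (∀ p ∈ columnPairs α (b + β) b, e p ∈ p.1 \ p.2 ∧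
        ColumnLE (moveEntry (e p) p).1 (moveEntry (e p) p).2) ∧
      Set.InjOn (fun p => moveEntry (e p) p) (columnPairs α (b + β) b) := by
  choose! f hf_mem hf_inj using fun (U : Finset α) (k : ℕ) (hU : #U = 2 * k + β ∧ k ≤ b) =>
    exists_injOn_insert_ballotSubsets (β := β) hU.1 (by omega)
  let e (p : Finset α × Finset α) : α := f (symmDiff p.1 p.2) #(p.2 \ p.1) (p.2 \ p.1)
  have hcard {p} (hp : p ∈ columnPairs α (b + β) b) :
      #(symmDiff p.1 p.2) = 2 * #(p.2 \ p.1) + β ∧ #(p.2 \ p.1) ≤ b :=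
    ⟨card_symmDiff_of_card_eq_add (by rw [hp.1, hp.2.1]), hp.2.1 ▸ card_le_card sdiff_subset⟩
  have hballot {p} (hp : p ∈ columnPairs α (b + β) b) :
      p.2 \ p.1 ∈ ballotSubsets (symmDiff p.1 p.2) #(p.2 \ p.1) :=
    sdiff_mem_ballotSubsets_symmDiff_iff.2 ⟨rfl, hp.2.2⟩
  have he_insert {p} (hp : p ∈ columnPairs α (b + β) b) :
      insert (e p) (p.2 \ p.1) ∈ ballotSubsets (symmDiff p.1 p.2) (#(p.2 \ p.1) + 1) :=
    (hf_mem _ _ (hcard hp) _ (hballot hp)).2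
  have he_mem {p} (hp : p ∈ columnPairs α (b + β) b) : e p ∈ p.1 \ p.2 := by
    rw [← symmDiff_sdiff_sdiff]
    exact mem_sdiff.2 ⟨(mem_ballotSubsets.1 (he_insert hp)).1 (mem_insert_self _ _),
      (hf_mem _ _ (hcard hp) _ (hballot hp)).1⟩
  refine ⟨e, fun p hp => ⟨he_mem hp, ?_⟩, fun p hp q hq (h : moveEntry _ _ = moveEntry _ _) => ?_⟩
  · have hmem := he_insert hp
    rw [← symmDiff_moveEntry (he_mem hp), ← sdiff_moveEntry] at hmem
    exact (sdiff_mem_ballotSubsets_symmDiff_iff.1 hmem).2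
  · have hU : symmDiff p.1 p.2 = symmDiff q.1 q.2 := by
      rw [← symmDiff_moveEntry (he_mem hp), ← symmDiff_moveEntry (he_mem hq), h]
    have hk : #(p.2 \ p.1) = #(q.2 \ q.1) := by
      have := (hcard hp).1.symm.trans ((congrArg card hU).trans (hcard hq).1)
      omega
    have hinsert : insert (e p) (p.2 \ p.1) = insert (e q) (q.2 \ q.1) := by
      rw [← sdiff_moveEntry, ← sdiff_moveEntry, h]
    have hS : p.2 \ p.1 = q.2 \ q.1 :=
      hf_inj _ _ (hcard hq) (hU ▸ hk ▸ hballot hp) (hballot hq)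
        (by simpa only [e, hU, hk] using hinsert)
    have he : e p = e q := by simp only [e, hU, hS]
    exact moveEntry_injOn (he_mem hp) (he ▸ he_mem hq) (by rw [h, he])

end MovableEntry

section NthEntry

variable {S X Y : Finset ℕ} {i x : ℕ}

/-- The `i`-th smallest element of `S`, counting from `0`; it is `0` when `#S ≤ i`. -/
noncomputable def nthEntry (S : Finset ℕ) (i : ℕ) : ℕ := Nat.nth (· ∈ S) i

theorem finite_ofPred_mem (S : Finset ℕ) : (Set.ofPred (· ∈ S)).Finite := S.finite_toSet

theorem card_toFinset_finite_ofPred_mem (S : Finset ℕ) : #(finite_ofPred_mem S).toFinset = #S :=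
  congrArg card (by ext; simp)

theorem nthEntry_eq_zero (h : #S ≤ i) : nthEntry S i = 0 :=
  Nat.nth_of_card_le (finite_ofPred_mem S) (by rwa [card_toFinset_finite_ofPred_mem])

theorem nthEntry_mem (h : i < #S) : nthEntry S i ∈ S :=
  Nat.nth_mem_of_lt_card (finite_ofPred_mem S) (by rwa [card_toFinset_finite_ofPred_mem])

theorem strictMonoOn_nthEntry (S : Finset ℕ) : StrictMonoOn (nthEntry S) (Set.Iio #S) :=
  fun _ _ _ hj hij =>
    Nat.nth_lt_nth_of_lt_card (finite_ofPred_mem S) hij (by rwa [card_toFinset_finite_ofPred_mem])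

theorem image_nthEntry (S : Finset ℕ) : (range #S).image (nthEntry S) = S := by
  refine eq_of_subset_of_card_le (image_subset_iff.2 fun i hi => nthEntry_mem (mem_range.1 hi)) ?_
  rw [card_image_of_injOn (by simpa using (strictMonoOn_nthEntry S).injOn), card_range]

theorem eqOn_nthEntry {f : ℕ → ℕ} (hf : StrictMonoOn f (Set.Iio #S)) (hmem : ∀ i < #S, f i ∈ S) :
    Set.EqOn f (nthEntry S) (Set.Iio #S) := by
  intro i hi
  have hunique {g : ℕ → ℕ} (hg : StrictMonoOn g (Set.Iio #S)) (hg_mem : ∀ i < #S, g i ∈ S) :=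
    orderEmbOfFin_unique (s := S) rfl (f := fun i : Fin #S => g i) (fun i => hg_mem i i.2)
      fun i j hij => hg i.2 j.2 hij
  have := (hunique hf hmem).trans
    (hunique (strictMonoOn_nthEntry S) fun i hi => nthEntry_mem hi).symm
  exact congrFun this ⟨i, hi⟩

theorem nthEntry_le_iff (h : i < #S) : nthEntry S i ≤ x ↔ i < #{y ∈ S | y ≤ x} := by
  have hcount : #{y ∈ S | y ≤ x} = Nat.count (· ∈ S) (x + 1) := by
    rw [Nat.count_eq_card_filter_range]
    congr 1
    grind
  rw [hcount, ← Nat.lt_succ_iff]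
  refine ⟨fun hx => ?_, Nat.nth_lt_of_lt_count⟩
  have hsucc : Nat.count (· ∈ S) (nthEntry S i + 1) = i + 1 :=
    Nat.count_nth_succ fun _ => by rwa [card_toFinset_finite_ofPred_mem]
  exact hsucc.symm.trans_le (Nat.count_monotone _ hx)

theorem columnLE_iff_nthEntry :
    ColumnLE X Y ↔ #Y ≤ #X ∧ ∀ i < #Y, nthEntry X i ≤ nthEntry Y i := by
  refine ⟨fun h => ⟨h.card_le, fun i hi => ?_⟩, fun ⟨hcard, h⟩ x => ?_⟩
  · exact (nthEntry_le_iff (hi.trans_le h.card_le)).2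
      (((nthEntry_le_iff hi).1 le_rfl).trans_le (h _))
  · refine le_of_forall_lt fun i hi => ?_
    have hiY : i < #Y := hi.trans_le (card_filter_le _ _)
    exact (nthEntry_le_iff (hiY.trans_le hcard)).1
      ((h i hiY).trans ((nthEntry_le_iff hiY).2 hi))

end NthEntry

section ColumnTableaux

variable {l : List ℕ} {T : ℕ → ℕ → ℕ} {C : ℕ → Finset ℕ} {i j : ℕ}

/-- The height of the `j`-th column of the Young diagram with row lengths `l`. -/
def colHeight (l : List ℕ) (j : ℕ) : ℕ := l.countP (j < ·)

/-- The semistandard tableaux of content `ν` with column heights `h`, each tableau being encoded as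
the sequence of the sets of entries of its columns. -/
def columnTableaux (h : ℕ → ℕ) (ν : List ℕ) : Set (ℕ → Finset ℕ) :=
  {C | (∀ j, #(C j) = h j) ∧ (∀ j, ColumnLE (C j) (C (j + 1))) ∧
    ∀ k, Nat.card {j // k ∈ C j} = ν.getD k 0}

/-- The sets of entries of the columns of a tableau `T` of shape `l`. -/
def columnsOf (l : List ℕ) (T : ℕ → ℕ → ℕ) (j : ℕ) : Finset ℕ :=
  (range (colHeight l j)).image (T · j)

/-- The tableau whose columns are the sets `C j`, arranged in increasing order. -/
noncomputable def tableauOf (C : ℕ → Finset ℕ) (i j : ℕ) : ℕ := nthEntry (C j) i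

theorem colHeight_cons (a : ℕ) (l : List ℕ) (j : ℕ) :
    colHeight (a :: l) j = colHeight l j + if j < a then 1 else 0 := by
  simp only [colHeight, List.countP_cons, decide_eq_true_eq]

theorem colHeight_eq_zero (h : ∀ x ∈ l, x ≤ j) : colHeight l j = 0 :=
  List.countP_eq_zero.2 fun x hx => by simpa using h x hx

theorem lt_getD_iff (hl : l.Pairwise (· ≥ ·)) : j < l.getD i 0 ↔ i < colHeight l j := by
  induction l generalizing i with
  | nil => simp [colHeight]
  | cons a l ih =>
    obtain ⟨ha, hl⟩ := List.pairwise_cons.1 hl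
    rw [colHeight_cons]
    by_cases hj : j < a
    · cases i with
      | zero => simp [hj]
      | succ i => simpa [hj] using ih hl
    · have hzero : colHeight l j = 0 := colHeight_eq_zero fun x hx => (ha x hx).trans (not_lt.1 hj)
      cases i with
      | zero => simp [hj, hzero]
      | succ i => simpa [hj, hzero] using (ih hl (i := i)).not

theorem antitone_colHeight (l : List ℕ) : Antitone (colHeight l) := fun _ _ hij =>
  List.countP_mono_left fun _ _ h => by simp only [decide_eq_true_eq] at *; omega

theorem isSSYT_iff (hl : l.Pairwise (· ≥ ·)) :
    IsSSYT l T ↔ (∀ i j, i < colHeight l (j + 1) → T i j ≤ T i (j + 1)) ∧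
      (∀ j, StrictMonoOn (T · j) (Set.Iio (colHeight l j))) ∧
      ∀ i j, colHeight l j ≤ i → T i j = 0 := by
  have hout {i j : ℕ} : l.getD i 0 ≤ j ↔ colHeight l j ≤ i := by
    simpa only [not_lt] using (lt_getD_iff hl (i := i) (j := j)).not
  simp only [IsSSYT, lt_getD_iff hl, hout]
  refine and_congr ⟨fun h i j => h i j (j + 1) j.le_succ, fun h i j₁ j₂ hj => ?_⟩
    (and_congr_left' ⟨fun h j i₁ _ i₂ hi₂ hi => h i₁ i₂ j hi hi₂,
      fun h i₁ i₂ j hi hi₂ => h j (hi.trans hi₂) hi₂ hi⟩)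
  induction j₂, hj using Nat.le_induction with
  | base => exact fun _ => le_rfl
  | succ j₂ _ ih =>
    exact fun hi => (ih (hi.trans_le (antitone_colHeight l j₂.le_succ))).trans (h i j₂ hi)

theorem IsSSYT.card_columnsOf (hl : l.Pairwise (· ≥ ·)) (hT : IsSSYT l T) (j : ℕ) :
    #(columnsOf l T j) = colHeight l j := by
  rw [columnsOf, card_image_of_injOn, card_range]
  simpa using (((isSSYT_iff hl).1 hT).2.1 j).injOn

theorem IsSSYT.tableauOf_columnsOf (hl : l.Pairwise (· ≥ ·)) (hT : IsSSYT l T) :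
    tableauOf (columnsOf l T) = T := by
  have hcard := hT.card_columnsOf hl
  obtain ⟨-, hcol, hzero⟩ := (isSSYT_iff hl).1 hT
  funext i j
  rcases lt_or_ge i (colHeight l j) with hi | hi
  · refine (eqOn_nthEntry (f := (T · j)) ?_ (fun i hi => ?_) ?_).symm
    · exact hcard j ▸ hcol j
    · exact mem_image_of_mem _ (mem_range.2 (hcard j ▸ hi))
    · exact (hcard j).symm ▸ hi
  · rw [hzero i j hi]
    exact nthEntry_eq_zero (by rwa [hcard])

theorem columnsOf_tableauOf (hC : ∀ j, #(C j) = colHeight l j) :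
    columnsOf l (tableauOf C) = C := by
  funext j
  rw [columnsOf, ← hC]
  exact image_nthEntry (C j)

theorem IsSSYT.card_cells_eq (hl : l.Pairwise (· ≥ ·)) (hT : IsSSYT l T) (k : ℕ) :
    Nat.card {c : ℕ × ℕ // c.2 < l.getD c.1 0 ∧ T c.1 c.2 = k} =
      Nat.card {j // k ∈ columnsOf l T j} := by
  obtain ⟨-, hcol, -⟩ := (isSSYT_iff hl).1 hT
  have hmem {j : ℕ} : k ∈ columnsOf l T j ↔ ∃ i, i < colHeight l j ∧ T i j = k := by
    simp only [columnsOf, mem_image, mem_range]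
  simp only [lt_getD_iff hl]
  refine Nat.card_eq_of_bijective
    (fun c => (⟨c.1.2, hmem.2 ⟨c.1.1, c.2⟩⟩ : {j // k ∈ columnsOf l T j})) ⟨?_, ?_⟩
  · rintro ⟨⟨i, j⟩, hi, hik⟩ ⟨⟨i', j'⟩, hi', hik'⟩ h
    obtain rfl : j = j' := congrArg Subtype.val h
    obtain rfl : i = i' := (hcol j).injOn hi hi' (hik.trans hik'.symm)
    rfl
  · rintro ⟨j, hj⟩
    obtain ⟨i, hi⟩ := hmem.1 hj
    exact ⟨⟨(i, j), hi⟩, rfl⟩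

theorem isSSYT_tableauOf (hl : l.Pairwise (· ≥ ·)) (hC : ∀ j, #(C j) = colHeight l j)
    (hle : ∀ j, ColumnLE (C j) (C (j + 1))) : IsSSYT l (tableauOf C) := by
  refine (isSSYT_iff hl).2 ⟨fun i j hi => ?_, fun j => ?_, fun i j hi => ?_⟩
  · exact (columnLE_iff_nthEntry.1 (hle j)).2 i (by rwa [hC])
  · exact hC j ▸ strictMonoOn_nthEntry (C j)
  · exact nthEntry_eq_zero (by rwa [hC])

theorem IsSSYT.columnLE_columnsOf (hl : l.Pairwise (· ≥ ·)) (hT : IsSSYT l T) (j : ℕ) :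
    ColumnLE (columnsOf l T j) (columnsOf l T (j + 1)) := by
  have hcard := hT.card_columnsOf hl
  have hentry (i j) : nthEntry (columnsOf l T j) i = T i j :=
    congrFun₂ (hT.tableauOf_columnsOf hl) i j
  simp only [columnLE_iff_nthEntry, hcard, hentry]
  exact ⟨antitone_colHeight l j.le_succ, fun i => ((isSSYT_iff hl).1 hT).1 i j⟩

theorem kostka_eq_card_columnTableaux (hl : l.Pairwise (· ≥ ·)) (ν : List ℕ) :
    kostka l ν = Nat.card (columnTableaux (colHeight l) ν) :=
  Nat.card_congr
    { toFun := fun T => ⟨columnsOf l T.1, T.2.1.card_columnsOf hl, T.2.1.columnLE_columnsOf hl,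
        fun k => (T.2.1.card_cells_eq hl k).symm.trans (T.2.2 k)⟩
      invFun := fun C => ⟨tableauOf C.1, isSSYT_tableauOf hl C.2.1 C.2.2.1, fun k => by
        rw [(isSSYT_tableauOf hl C.2.1 C.2.2.1).card_cells_eq hl, columnsOf_tableauOf C.2.1]
        exact C.2.2.2 k⟩
      left_inv := fun T => Subtype.ext (T.2.1.tableauOf_columnsOf hl)
      right_inv := fun C => Subtype.ext (columnsOf_tableauOf C.2.1) }

end ColumnTableaux

section MoveEntryAt

variable {h h' : ℕ → ℕ} {ν : List ℕ} {C : ℕ → Finset ℕ} {p x j M β : ℕ}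

theorem subset_range_of_mem_columnTableaux (hM : ∀ j ≥ M, h j = 0) (hC : C ∈ columnTableaux h ν)
    (j : ℕ) : C j ⊆ range ν.length := by
  intro k hk
  by_contra hkν
  have hcontent := hC.2.2 k
  rw [List.getD_eq_default _ _ (by simpa using hkν)] at hcontent
  have hfin : {j | k ∈ C j}.Finite := by
    refine (Set.finite_Iio M).subset fun j hj => ?_
    by_contra hjM
    have hempty := (hC.1 j).trans (hM j (not_lt.1 hjM))
    exact ne_empty_of_mem hj (card_eq_zero.1 hempty)
  rcases Nat.card_eq_zero.1 hcontent with hempty | hinf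
  · exact hempty.false ⟨j, hk⟩
  · exact hinf.not_finite hfin

theorem finite_columnTableaux (hM : ∀ j ≥ M, h j = 0) (ν : List ℕ) :
    (columnTableaux h ν).Finite := by
  let toColumns (C : columnTableaux h ν) (j : Fin M) : (range ν.length).powerset :=
    ⟨C.1 j, mem_powerset.2 (subset_range_of_mem_columnTableaux hM C.2 j)⟩
  refine Finite.of_injective toColumns fun C D hCD => Subtype.ext (funext fun j => ?_)
  rcases lt_or_ge j M with hj | hj
  · exact congrArg Subtype.val (congrFun hCD ⟨j, hj⟩)
  · rw [card_eq_zero.1 ((C.2.1 j).trans (hM j hj)), card_eq_zero.1 ((D.2.1 j).trans (hM j hj))]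

/-- Move the entry `x` of the `p`-th column to the next column. -/
def moveEntryAt (p x : ℕ) (C : ℕ → Finset ℕ) : ℕ → Finset ℕ :=
  Function.update (Function.update C p ((C p).erase x)) (p + 1) (insert x (C (p + 1)))

theorem moveEntryAt_left : moveEntryAt p x C p = (C p).erase x := by
  simp [moveEntryAt]

theorem moveEntryAt_right : moveEntryAt p x C (p + 1) = insert x (C (p + 1)) :=
  Function.update_self ..

theorem moveEntryAt_of_ne (hp : j ≠ p) (hp' : j ≠ p + 1) : moveEntryAt p x C j = C j := by
  simp [moveEntryAt, hp, hp']

theorem card_columns_moveEntryAt (hx : x ∈ C p \ C (p + 1)) (k : ℕ) :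
    Nat.card {j // k ∈ moveEntryAt p x C j} = Nat.card {j // k ∈ C j} := by
  obtain ⟨hx, hx'⟩ := mem_sdiff.1 hx
  refine Nat.card_congr
    (Equiv.subtypeEquiv (if k = x then Equiv.swap p (p + 1) else Equiv.refl ℕ) fun j => ?_)
  rcases eq_or_ne j p with rfl | hp
  · rw [moveEntryAt_left]
    grind [Equiv.swap_apply_left]
  rcases eq_or_ne j (p + 1) with rfl | hp'
  · rw [moveEntryAt_right]
    grind [Equiv.swap_apply_right]
  · rw [moveEntryAt_of_ne hp hp']
    grind [Equiv.swap_apply_of_ne_of_ne]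

theorem columnLE_moveEntryAt (hC : ∀ j, ColumnLE (C j) (C (j + 1)))
    (hx : ColumnLE ((C p).erase x) (insert x (C (p + 1)))) (j : ℕ) :
    ColumnLE (moveEntryAt p x C j) (moveEntryAt p x C (j + 1)) := by
  have hlarger (hj : j ≠ p) : C j ⊆ moveEntryAt p x C j := by
    rcases eq_or_ne j (p + 1) with rfl | hj'
    · exact moveEntryAt_right ▸ subset_insert _ _
    · rw [moveEntryAt_of_ne hj hj']
  have hsmaller (hj : j ≠ p) : moveEntryAt p x C (j + 1) ⊆ C (j + 1) := by
    rcases eq_or_ne (j + 1) p with rfl | hj'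
    · exact moveEntryAt_left ▸ erase_subset _ _
    · rw [moveEntryAt_of_ne hj' (by omega)]
  rcases eq_or_ne j p with rfl | hj
  · rwa [moveEntryAt_left, moveEntryAt_right]
  · exact (hC j).mono (hlarger hj) (hsmaller hj)

theorem moveEntryAt_mem_columnTableaux (hC : C ∈ columnTableaux h ν) (hp : h' p + 1 = h p)
    (hp' : h' (p + 1) = h (p + 1) + 1) (hne : ∀ j, j ≠ p → j ≠ p + 1 → h' j = h j)
    (hx : x ∈ C p \ C (p + 1)) (hcol : ColumnLE ((C p).erase x) (insert x (C (p + 1)))) :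
    moveEntryAt p x C ∈ columnTableaux h' ν := by
  refine ⟨fun j => ?_, columnLE_moveEntryAt hC.2.1 hcol, fun k => ?_⟩
  · obtain ⟨hx, hx'⟩ := mem_sdiff.1 hx
    rcases eq_or_ne j p with rfl | hj
    · rw [moveEntryAt_left, card_erase_of_mem hx, hC.1, ← hp, Nat.add_sub_cancel]
    rcases eq_or_ne j (p + 1) with rfl | hj'
    · rw [moveEntryAt_right, card_insert_of_notMem hx', hC.1, hp']
    · rw [moveEntryAt_of_ne hj hj', hC.1, hne j hj hj']
  · rw [card_columns_moveEntryAt hx, hC.2.2]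

theorem card_columnTableaux_le (hβ : h p = h (p + 1) + β)
    (hb : 2 * h (p + 1) + β + 2 ≤ β ^ 2) (hp : h' p + 1 = h p)
    (hp' : h' (p + 1) = h (p + 1) + 1) (hne : ∀ j, j ≠ p → j ≠ p + 1 → h' j = h j)
    (hM : ∀ j ≥ M, h' j = 0) :
    Nat.card (columnTableaux h ν) ≤ Nat.card (columnTableaux h' ν) := by
  obtain ⟨e, he, he_inj⟩ := exists_injOn_moveEntry (α := ℕ) hb
  have hpair {C} (hC : C ∈ columnTableaux h ν) :
      (C p, C (p + 1)) ∈ columnPairs ℕ (h (p + 1) + β) (h (p + 1)) :=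
    ⟨hβ ▸ hC.1 p, hC.1 (p + 1), hC.2.1 p⟩
  refine Set.ncard_le_ncard_of_injOn (fun C => moveEntryAt p (e (C p, C (p + 1))) C)
    (fun C hC => ?_) (fun C hC D hD hCD => ?_) (finite_columnTableaux hM ν)
  · obtain ⟨hx, hcol⟩ := he _ (hpair hC)
    exact moveEntryAt_mem_columnTableaux hC hp hp' hne hx hcol
  · have hcol (j : ℕ) := congrFun hCD j
    have hpair_eq : (C p, C (p + 1)) = (D p, D (p + 1)) := by
      refine he_inj (hpair hC) (hpair hD) (Prod.ext ?_ ?_)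
      · simpa only [moveEntry, moveEntryAt_left] using hcol p
      · simpa only [moveEntry, moveEntryAt_right] using hcol (p + 1)
    funext j
    rcases eq_or_ne j p with rfl | hj
    · exact congrArg Prod.fst hpair_eq
    rcases eq_or_ne j (p + 1) with rfl | hj'
    · exact congrArg Prod.snd hpair_eq
    · simpa only [moveEntryAt_of_ne hj hj'] using hcol j

end MoveEntryAt

section MovedShape

variable {c β j : ℕ} {pre suf : List ℕ}

theorem colHeight_append (l l' : List ℕ) (j : ℕ) :
    colHeight (l ++ l') j = colHeight l j + colHeight l' j :=
  List.countP_append ..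

theorem colHeight_replicate (n c j : ℕ) :
    colHeight (List.replicate n c) j = if j < c then n else 0 := by
  simp [colHeight, List.countP_replicate]

theorem colHeight_filter_ne_zero (l : List ℕ) (j : ℕ) :
    colHeight (l.filter (fun x => x ≠ 0)) j = colHeight l j := by
  rw [colHeight, List.countP_filter]
  exact List.countP_congr fun x _ => by simp; omega

theorem colHeight_eq_length {l : List ℕ} (h : ∀ x ∈ l, j < x) : colHeight l j = l.length :=
  List.countP_eq_length.2 fun x hx => decide_eq_true (h x hx)

theorem colHeight_movedShape (c β : ℕ) (pre suf : List ℕ) (j : ℕ) :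
    colHeight (movedShape c β pre suf) j =
      colHeight pre j + colHeight suf j + (if j < c then β - 2 else 0) +
        (if j < c + 1 then 1 else 0) + if j < c - 1 then 1 else 0 := by
  simp only [movedShape, colHeight_append, colHeight_cons, colHeight_replicate,
    colHeight_filter_ne_zero]
  omega

theorem pairwise_movedShape (hpre : ∀ x ∈ pre, c < x) (hsuf : ∀ x ∈ suf, x < c)
    (hsorted : (pre ++ List.replicate β c ++ suf).Pairwise (· ≥ ·)) :
    (movedShape c β pre suf).Pairwise (· ≥ ·) := by
  obtain ⟨hpreβ, hsuf_sorted, -⟩ := List.pairwise_append.1 hsorted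
  have hpre_sorted := (List.pairwise_append.1 hpreβ).1
  have htail : ((c - 1) :: suf).Pairwise (· ≥ ·) :=
    List.pairwise_cons.2 ⟨fun x hx => by grind, hsuf_sorted⟩
  refine List.pairwise_append.2 ⟨hpre_sorted, List.pairwise_cons.2 ⟨?_, ?_⟩, ?_⟩
  · grind
  · refine List.pairwise_append.2 ⟨List.pairwise_replicate.2 (.inr le_rfl), htail.filter _, ?_⟩
    grind
  · grind

theorem kostka_le_of_moved_box_one_general (c β : ℕ) (pre suf : List ℕ) (hc : 1 ≤ c)
    (hβ : 2 * pre.length + β + 2 ≤ β ^ 2) (hpre : ∀ x ∈ pre, c < x) (hsuf : ∀ x ∈ suf, x < c)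
    (hsorted : (pre ++ List.replicate β c ++ suf).Pairwise (· ≥ ·)) (ν : List ℕ) :
    kostka (pre ++ List.replicate β c ++ suf) ν ≤ kostka (movedShape c β pre suf) ν := by
  have hβ2 : 2 ≤ β := by nlinarith
  obtain ⟨p, rfl⟩ : ∃ p, c = p + 1 := Nat.exists_eq_add_of_le' hc
  have hpre_height {j : ℕ} (hj : j ≤ p + 1) : colHeight pre j = pre.length :=
    colHeight_eq_length fun x hx => hj.trans_lt (hpre x hx)
  have hsuf_height {j : ℕ} (hj : p ≤ j) : colHeight suf j = 0 :=
    colHeight_eq_zero fun x hx => (Nat.le_of_lt_succ (hsuf x hx)).trans hj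
  have hleft : colHeight (pre ++ List.replicate β (p + 1) ++ suf) p = pre.length + β := by
    simp [colHeight_append, colHeight_replicate, hpre_height, hsuf_height]
  have hright : colHeight (pre ++ List.replicate β (p + 1) ++ suf) (p + 1) = pre.length := by
    simp [colHeight_append, colHeight_replicate, hpre_height, hsuf_height]
  rw [kostka_eq_card_columnTableaux hsorted,
    kostka_eq_card_columnTableaux (pairwise_movedShape hpre hsuf hsorted)]
  refine card_columnTableaux_le (p := p) (β := β) (M := (movedShape (p + 1) β pre suf).sum)
    (by rw [hleft, hright]) (by rwa [hright]) ?_ ?_ (fun j hj hj' => ?_)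
    fun j hj => colHeight_eq_zero fun x hx => (List.le_sum_of_mem hx).trans hj
  · rw [hleft, colHeight_movedShape, hpre_height p.le_succ, hsuf_height le_rfl]
    split_ifs <;> omega
  · rw [hright, colHeight_movedShape, hpre_height le_rfl, hsuf_height p.le_succ]
    split_ifs <;> omega
  · simp only [colHeight_movedShape, colHeight_append, colHeight_replicate]
    split_ifs <;> omega

end MovedShape

/-- Same as Statement 9, but with `β = α + 1` and `α ≥ 2`. -/
theorem kostka_le_of_moved_box_one (n c α β : ℕ) (pre suf : List ℕ) (hc : 1 ≤ c)
    (hα : pre.length = α) (hα2 : 2 ≤ α) (hβ : β = α + 1)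
    (hpre : ∀ x ∈ pre, c < x) (hsuf : ∀ x ∈ suf, x < c)
    (hlam : IsPartitionOf n (pre ++ List.replicate β c ++ suf)) :
    (∀ ν, IsPartitionOf n ν →
        kostka (pre ++ List.replicate β c ++ suf) ν ≤ kostka (movedShape c β pre suf) ν) ∧
      ImmersionLE n (pre ++ List.replicate β c ++ suf) (movedShape c β pre suf) := by
  have hle := kostka_le_of_moved_box_one_general c β pre suf hc (by subst hα hβ; nlinarith)
    hpre hsuf hlam.1
  exact ⟨fun ν _ => hle ν, fun ν _ => hle ν⟩
end

section
/- Let c ≥ 1, α ≥ 4, β = α, and let λ = (λ_1, …, λ_α, c^β, λ_{α+β+1}, …) be a partition of n with λ_{α+β+1} < c < λ_α. Let μ = (λ_1, …, λ_α, c+1, c^{β−2}, c−1, λ_{α+β+1}, …). Then K_{λ,ν} ≤ K_{μ,ν} for every partition ν of n; in particular λ ≤_I μ in the immersion poset. -/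
open Finset MvPolynomial

/-!
A semistandard tableau is a chain of diagrams growing by horizontal strips, and such a chain is
recorded by the heights of the columns at each time. Moving the box from row `α + β` to row `α + 1`
lowers column `c` from `α + β` to `α + β - 1` and raises column `c + 1` from `α` to `α + 1`. We
compare chains with fixed heights of all other columns and fixed sum of these two heights. Such a
chain is a lattice walk, the height of column `c`, from `0` to `α + β` or to `α + β - 1`; it has to
stay at least half of the sum, and the neighbouring columns bound it from above. Without the latter
constraint the two walks are counted by ballot numbers, and `2 (α + 1) ≤ β (β - 1)` says that the
second one is the larger. The constraint only excludes large heights, so it lowers the ratio of the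
first count to the second: this is a monotone likelihood ratio property that is preserved by each
step of the walk.
-/

section FiberwiseCounting

theorem ncard_le_ncard_of_fiberwise {X Y : Type*} {S S' : Set X} (hS : S.Finite) (hS' : S'.Finite)
    (r : X → Y)
    (h : ∀ x₀ ∈ S, {x ∈ S | r x = r x₀}.ncard ≤ {x ∈ S' | r x = r x₀}.ncard) :
    S.ncard ≤ S'.ncard := by
  classical
  lift S to Finset X using hS
  lift S' to Finset X using hS'
  have fiber_le (x₀ : X) (hx₀ : x₀ ∈ S) : #{x ∈ S | r x = r x₀} ≤ #{x ∈ S' | r x = r x₀} := by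
    simpa only [← Set.ncard_coe_finset, coe_filter, mem_coe] using h x₀ hx₀
  rw [Set.ncard_coe_finset, Set.ncard_coe_finset]
  calc #S = ∑ y ∈ S.image r, #{x ∈ S | r x = y} := card_eq_sum_card_image r S
    _ ≤ ∑ y ∈ S.image r, #{x ∈ S' | r x = y} :=
      sum_le_sum fun y hy ↦ by obtain ⟨x₀, hx₀, rfl⟩ := mem_image.1 hy; exact fiber_le x₀ hx₀
    _ = #{x ∈ S' | r x ∈ S.image r} := sum_card_fiberwise_eq_card_filter S' (S.image r) r
    _ ≤ #S' := card_filter_le S' _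

end FiberwiseCounting

section BallotNumbers

/-- The ballot number: the number of sequences of `n` steps `±1` from `0` that stay nonnegative
and have exactly `p` steps `+1`. The truncated subtraction correctly gives `0` when `2 * p < n`. -/
def ballotNumber (n p : ℕ) : ℕ := n.choose p - n.choose (p + 1)

theorem ballotNumber_mul_succ (n p : ℕ) :
    ballotNumber n p * (p + 1) = n.choose p * (2 * p + 1 - n) := by
  rw [ballotNumber, Nat.sub_mul, Nat.choose_succ_right_eq, ← Nat.mul_sub]
  rcases lt_or_ge n p with hp | hp
  · simp only [Nat.choose_eq_zero_of_lt hp, zero_mul]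
  · congr 1
    omega

theorem ballotNumber_eq_zero_of_le {n p : ℕ} (h : 2 * p + 1 ≤ n) : ballotNumber n p = 0 := by
  have := ballotNumber_mul_succ n p
  simpa [Nat.sub_eq_zero_of_le h] using this

theorem ballotNumber_eq_zero_of_lt {n p : ℕ} (h : n < p) : ballotNumber n p = 0 := by
  rw [ballotNumber, Nat.choose_eq_zero_of_lt h, Nat.zero_sub]

theorem choose_succ_le_choose {n p : ℕ} (h : n ≤ 2 * p + 1) : n.choose (p + 1) ≤ n.choose p := by
  refine Nat.le_of_mul_le_mul_right ?_ p.succ_pos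
  rw [Nat.choose_succ_right_eq]
  exact Nat.mul_le_mul_left _ (by omega)

theorem ballotNumber_succ_succ {n p : ℕ} (h : n ≤ 2 * p + 1) :
    ballotNumber (n + 1) (p + 1) = ballotNumber n p + ballotNumber n (p + 1) := by
  have h₁ := choose_succ_le_choose h
  have h₂ := choose_succ_le_choose (n := n) (p := p + 1) (by omega)
  simp only [ballotNumber, Nat.choose_succ_succ']
  omega

/-- In the hook-length form of both sides, the inequality becomes
`(r + 1) (d + 1) ≤ (d - 1) (r + d + 1)`. -/
theorem ballotNumber_le_ballotNumber_pred {r d : ℕ} (h : 2 * (r + 1) ≤ d * (d - 1)) :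
    ballotNumber (2 * r + d) (r + d) ≤ ballotNumber (2 * r + d) (r + d - 1) := by
  obtain ⟨k, rfl⟩ : ∃ k, d = k + 1 :=
    Nat.exists_eq_succ_of_ne_zero (by rintro rfl; omega)
  rw [Nat.add_sub_cancel] at h
  set n := 2 * r + (k + 1)
  set p := r + k
  have hook : ballotNumber n (p + 1) * (p + 2) = n.choose (p + 1) * (k + 2) := by
    rw [ballotNumber_mul_succ]; congr 1; omega
  have hook_pred : ballotNumber n p * (p + 1) = n.choose p * k := by
    rw [ballotNumber_mul_succ]; congr 1; omega
  have choose_ratio : n.choose (p + 1) * (p + 1) = n.choose p * (r + 1) := by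
    rw [Nat.choose_succ_right_eq]; congr 1; omega
  refine Nat.le_of_mul_le_mul_right (c := (p + 2) * (p + 1)) ?_
    (Nat.mul_pos (p + 1).succ_pos p.succ_pos)
  calc ballotNumber n (p + 1) * ((p + 2) * (p + 1))
      = n.choose p * ((r + 1) * (k + 2)) := by
        rw [← mul_assoc, hook, mul_right_comm, choose_ratio, mul_assoc]
    _ ≤ n.choose p * (k * (p + 2)) := Nat.mul_le_mul_left _ (by simp only [p]; nlinarith)
    _ = ballotNumber n p * ((p + 2) * (p + 1)) := by
        rw [mul_comm (p + 2), ← mul_assoc (ballotNumber n p), hook_pred, mul_assoc]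

end BallotNumbers

section Walks

variable {σ : Type*} {P : ℕ → σ → Finset σ} {a b : σ} {K : ℕ}

/-- The walks of length `K` from `a` to `b` in which a state `v` at time `x + 1` is preceded by
an element of `P x v`. A walk is encoded as a function on `ℕ` that is constant from time `K` on. -/
def walks (P : ℕ → σ → Finset σ) (a : σ) (K : ℕ) (b : σ) : Set (ℕ → σ) :=
  {f | f 0 = a ∧ (∀ x < K, f x ∈ P x (f (x + 1))) ∧ ∀ x, K ≤ x → f x = b}

theorem walks_zero_self : walks P a 0 a = {fun _ ↦ a} := by
  ext f
  simp only [walks, Set.mem_ofPred_eq, Set.mem_singleton_iff]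
  constructor
  · rintro ⟨-, -, h⟩
    exact funext fun x ↦ h x x.zero_le
  · rintro rfl
    simp

theorem walks_zero_of_ne (hab : a ≠ b) : walks P a 0 b = ∅ :=
  Set.eq_empty_of_forall_notMem fun _ hf ↦ hab (hf.1.symm.trans (hf.2.2 0 le_rfl))

theorem walks_truncate {f : ℕ → σ} (hf : f ∈ walks P a (K + 1) b) :
    (fun x ↦ f (min x K)) ∈ walks P a K (f K) := by
  obtain ⟨h0, hstep, -⟩ := hf
  refine ⟨by simpa using h0, fun x hx ↦ ?_, fun x hx ↦ by simp [hx]⟩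
  simpa [hx.le, Nat.succ_le_of_lt hx] using hstep x (hx.trans K.lt_succ_self)

theorem walks_extend {f : ℕ → σ} {v : σ} (hf : f ∈ walks P a K v) (hv : v ∈ P K b) :
    (fun x ↦ if x ≤ K then f x else b) ∈ walks P a (K + 1) b := by
  obtain ⟨h0, hstep, hend⟩ := hf
  refine ⟨by simpa using h0, fun x hx ↦ ?_, fun x hx ↦ if_neg (by omega)⟩
  rcases Nat.lt_succ_iff_lt_or_eq.1 hx with hx | rfl
  · simpa [hx.le, Nat.succ_le_of_lt hx] using hstep x hx
  · simpa [hend x le_rfl] using hv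

theorem walks_truncate_bijOn :
    Set.BijOn (fun f x ↦ f (min x K)) (walks P a (K + 1) b) (⋃ v ∈ P K b, walks P a K v) := by
  refine Set.InvOn.bijOn (f' := fun f x ↦ if x ≤ K then f x else b) ⟨?_, ?_⟩ ?_ ?_
  · rintro f ⟨-, -, hend⟩
    ext x
    by_cases hx : x ≤ K
    · simp [hx]
    · simp [hx, hend x (by omega)]
  · intro f hf
    obtain ⟨v, -, -, -, hend⟩ := Set.mem_iUnion₂.1 hf
    ext x
    rcases le_total x K with hx | hx <;> simp [hx, hend]
  · intro f hf
    have last_mem : f K ∈ P K b := hf.2.2 (K + 1) le_rfl ▸ hf.2.1 K K.lt_succ_self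
    exact Set.mem_biUnion last_mem (walks_truncate hf)
  · intro f hf
    obtain ⟨v, hv, hf⟩ := Set.mem_iUnion₂.1 hf
    exact walks_extend hf hv

theorem finite_walks (P : ℕ → σ → Finset σ) (a : σ) (K : ℕ) (b : σ) : (walks P a K b).Finite := by
  induction K generalizing b with
  | zero =>
    by_cases hab : a = b
    · rw [hab, walks_zero_self]
      exact Set.finite_singleton _
    · rw [walks_zero_of_ne hab]
      exact Set.finite_empty
  | succ K ih =>
    exact walks_truncate_bijOn.finite_iff_finite.2
      ((P K b).finite_toSet.biUnion fun v _ ↦ ih v)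

theorem ncard_walks_succ : (walks P a (K + 1) b).ncard = ∑ v ∈ P K b, (walks P a K v).ncard := by
  have walks_disjoint : ((P K b : Set σ)).PairwiseDisjoint (walks P a K) := by
    refine fun v _ w _ hvw ↦ Set.disjoint_left.2 fun f hv hw ↦ hvw ?_
    exact (hv.2.2 K le_rfl).symm.trans (hw.2.2 K le_rfl)
  rw [walks_truncate_bijOn.ncard_eq, ← finsum_mem_coe_finset]
  exact (P K b).finite_toSet.ncard_biUnion (fun v _ ↦ finite_walks P a K v) walks_disjoint

end Walks

section TwoColumnWalks

/-- The number of times before `x` at which the sequence `S` increases by `2`. -/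
def doubleSteps (S : ℕ → ℕ) (x : ℕ) : ℕ := #{y ∈ range x | S (y + 1) = S y + 2}

/-- Two columns growing by at most one cell per time step, of total height `S x` at time `x`:
the possible heights at time `x` of the first column if its height at time `x + 1` is `a`. -/
def columnPreds (S : ℕ → ℕ) (x a : ℕ) : Finset ℕ :=
  {k ∈ range (a + 1) | a ≤ k + 1 ∧ S x + a ≤ S (x + 1) + k ∧ S (x + 1) + k ≤ S x + a + 1}

open Classical in
/-- Restriction of `columnPreds` to columns in weakly decreasing order whose first column
satisfies the constraint `fits`. -/
noncomputable def constrainedPreds (S : ℕ → ℕ) (fits : ℕ → ℕ → Prop) (x a : ℕ) : Finset ℕ :=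
  if S (x + 1) ≤ 2 * a ∧ fits (x + 1) a then columnPreds S x a else ∅

/-- The number of constrained walks of length `x` from `0` to `a`. -/
noncomputable def constrainedCount (S : ℕ → ℕ) (fits : ℕ → ℕ → Prop) (x a : ℕ) : ℕ :=
  (walks (constrainedPreds S fits) 0 x a).ncard

/-- The number of walks of length `x` from `0` to `a` without the constraint `fits`: steps of `S`
by `0` or `2` are forced, and the remaining ones form a ballot sequence. -/
def freeCount (S : ℕ → ℕ) (x a : ℕ) : ℕ :=
  ballotNumber (S x - 2 * doubleSteps S x) (a - doubleSteps S x)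

variable {S : ℕ → ℕ} {fits : ℕ → ℕ → Prop} {x a i j : ℕ}

theorem mem_columnPreds {k : ℕ} : k ∈ columnPreds S x a ↔
    k ≤ a ∧ a ≤ k + 1 ∧ S x + a ≤ S (x + 1) + k ∧ S (x + 1) + k ≤ S x + a + 1 := by
  rw [columnPreds, mem_filter, mem_range, Nat.lt_succ_iff]

theorem mem_constrainedPreds {k : ℕ} :
    k ∈ constrainedPreds S fits x a ↔
      (S (x + 1) ≤ 2 * a ∧ fits (x + 1) a) ∧ k ∈ columnPreds S x a := by
  rw [constrainedPreds]
  split_ifs with h <;> simp [h]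

theorem doubleSteps_succ (S : ℕ → ℕ) (x : ℕ) :
    doubleSteps S (x + 1) = doubleSteps S x + if S (x + 1) = S x + 2 then 1 else 0 := by
  rw [doubleSteps, range_add_one, filter_insert, doubleSteps]
  split_ifs with h
  · exact card_insert_of_notMem (by simp)
  · rfl

theorem two_mul_doubleSteps_le (hS : Monotone S) (x : ℕ) : 2 * doubleSteps S x ≤ S x := by
  induction x with
  | zero => simp [doubleSteps]
  | succ x ih =>
    have := hS (x.le_add_right 1)
    rw [doubleSteps_succ]
    split_ifs <;> omega

theorem freeCount_eq_zero (hS : Monotone S) (h : S x = 2 * a + 1) : freeCount S x a = 0 := by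
  have := two_mul_doubleSteps_le hS x
  exact ballotNumber_eq_zero_of_le (by omega)

theorem columnPreds_of_eq (h : S (x + 1) = S x) : columnPreds S x a = {a} := by
  ext k
  rw [mem_columnPreds, mem_singleton]
  omega

theorem columnPreds_of_eq_add_one (h : S (x + 1) = S x + 1) :
    columnPreds S x (a + 1) = {a, a + 1} := by
  ext k
  rw [mem_columnPreds, mem_insert, mem_singleton]
  omega

theorem columnPreds_of_eq_add_two (h : S (x + 1) = S x + 2) :
    columnPreds S x (a + 1) = {a} := by
  ext k
  rw [mem_columnPreds, mem_singleton]
  omega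

theorem freeCount_succ (hS : Monotone S) (hS2 : S (x + 1) ≤ S x + 2) (ha : S (x + 1) ≤ 2 * a) :
    freeCount S (x + 1) a = ∑ k ∈ columnPreds S x a, freeCount S x k := by
  have hle := hS (x.le_add_right 1)
  have ht := two_mul_doubleSteps_le hS x
  have ht' := doubleSteps_succ S x
  rcases hle.eq_or_lt with h | h
  · rw [columnPreds_of_eq h.symm, sum_singleton, freeCount, freeCount, ht', ← h]
    simp
  obtain ⟨b, rfl⟩ : ∃ b, a = b + 1 := Nat.exists_eq_succ_of_ne_zero (by omega)
  obtain h | h : S (x + 1) = S x + 1 ∨ S (x + 1) = S x + 2 := by omega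
  · rw [if_neg (by omega), add_zero] at ht'
    rw [columnPreds_of_eq_add_one h, sum_pair (by omega), freeCount, freeCount, freeCount, ht', h,
      Nat.sub_add_comm ht, Nat.sub_add_comm (by omega)]
    exact ballotNumber_succ_succ (by omega)
  · rw [if_pos h] at ht'
    rw [columnPreds_of_eq_add_two h, sum_singleton, freeCount, freeCount, ht', h,
      Nat.add_sub_add_right, mul_add, mul_one, Nat.add_sub_add_right]

theorem constrainedCount_zero_of_ne_zero (ha : a ≠ 0) : constrainedCount S fits 0 a = 0 := by
  rw [constrainedCount, walks_zero_of_ne ha.symm, Set.ncard_empty]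

theorem constrainedCount_succ (h : S (x + 1) ≤ 2 * a ∧ fits (x + 1) a) :
    constrainedCount S fits (x + 1) a = ∑ k ∈ columnPreds S x a, constrainedCount S fits x k := by
  rw [constrainedCount, ncard_walks_succ, constrainedPreds, if_pos h]
  rfl

theorem constrainedCount_succ_eq_zero (h : ¬ (S (x + 1) ≤ 2 * a ∧ fits (x + 1) a)) :
    constrainedCount S fits (x + 1) a = 0 := by
  rw [constrainedCount, ncard_walks_succ, constrainedPreds, if_neg h, sum_empty]

theorem constrainedCount_le_freeCount (hS0 : S 0 = 0) (hS : Monotone S)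
    (hS2 : ∀ x, S (x + 1) ≤ S x + 2) (x a : ℕ) : constrainedCount S fits x a ≤ freeCount S x a := by
  induction x generalizing a with
  | zero =>
    rcases eq_or_ne a 0 with rfl | ha
    · rw [constrainedCount, walks_zero_self, Set.ncard_singleton]
      simp [freeCount, hS0, ballotNumber]
    · simp [constrainedCount_zero_of_ne_zero ha]
  | succ x ih =>
    by_cases h : S (x + 1) ≤ 2 * a ∧ fits (x + 1) a
    · rw [constrainedCount_succ h, freeCount_succ hS (hS2 x) h.1]
      exact sum_le_sum fun k _ ↦ ih k
    · simp [constrainedCount_succ_eq_zero h]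

/-- A constraint favouring small heights lowers the likelihood ratio of large ones against small
ones; the property propagates along steps since `columnPreds S x i` lies below
`columnPreds S x j` for `i < j`. -/
theorem constrainedCount_mul_freeCount_le (hS : Monotone S) (hS2 : ∀ x, S (x + 1) ≤ S x + 2)
    (hfits : ∀ x i j, i ≤ j → fits x j → fits x i) (hij : i ≤ j) (hi : S x ≤ 2 * i + 1) :
    constrainedCount S fits x j * freeCount S x i ≤
      constrainedCount S fits x i * freeCount S x j := by
  rcases hij.eq_or_lt with rfl | hlt
  · rfl
  induction x generalizing i j with
  | zero => simp [constrainedCount_zero_of_ne_zero (Nat.ne_zero_of_lt hlt)]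
  | succ x ih =>
    by_cases hj : S (x + 1) ≤ 2 * j ∧ fits (x + 1) j
    swap
    · simp [constrainedCount_succ_eq_zero hj]
    rcases hi.eq_or_lt with hi | hi
    · simp [freeCount_eq_zero hS hi]
    have hi : S (x + 1) ≤ 2 * i := Nat.le_of_lt_succ hi
    rw [constrainedCount_succ hj, freeCount_succ hS (hS2 x) hi,
      constrainedCount_succ ⟨hi, hfits _ _ _ hij hj.2⟩, freeCount_succ hS (hS2 x) hj.1,
      sum_mul_sum, sum_mul_sum, sum_comm]
    refine sum_le_sum fun k hk ↦ sum_le_sum fun l hl ↦ ?_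
    rw [mem_columnPreds] at hk hl
    obtain rfl | hkl : k = l ∨ k < l := by omega
    · rfl
    · exact ih hkl.le (by omega) hkl

theorem freeCount_le_freeCount_pred {q d : ℕ} (hS : Monotone S) (hx : S x = 2 * q + d)
    (hd : 2 * (q + 1) ≤ d * (d - 1)) : freeCount S x (q + d) ≤ freeCount S x (q + d - 1) := by
  have ht := two_mul_doubleSteps_le hS x
  simp only [freeCount, hx]
  set t := doubleSteps S x
  rcases le_or_gt t q with htq | htq
  · obtain ⟨r, rfl⟩ := Nat.exists_eq_add_of_le htq
    have : d ≠ 0 := by rintro rfl; omega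
    convert ballotNumber_le_ballotNumber_pred (r := r) (d := d) (by omega) using 2 <;> omega
  · rw [ballotNumber_eq_zero_of_lt (by omega)]
    exact Nat.zero_le _

theorem constrainedCount_le_pred {q d : ℕ} (hS0 : S 0 = 0) (hS : Monotone S)
    (hS2 : ∀ x, S (x + 1) ≤ S x + 2) (hfits : ∀ x i j, i ≤ j → fits x j → fits x i)
    (hx : S x = 2 * q + d) (hd : 2 * (q + 1) ≤ d * (d - 1)) :
    constrainedCount S fits x (q + d) ≤ constrainedCount S fits x (q + d - 1) := by
  have hd2 : 2 ≤ d := by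
    rcases d with _ | _ | d <;> omega
  have free_le := freeCount_le_freeCount_pred hS hx hd
  have ratio_le := constrainedCount_mul_freeCount_le (fits := fits) (x := x) hS hS2 hfits
    (q + d).pred_le (by rw [Nat.pred_eq_sub_one]; omega)
  rw [Nat.pred_eq_sub_one] at ratio_le
  rcases (freeCount S x (q + d - 1)).eq_zero_or_pos with h0 | hpos
  · have := constrainedCount_le_freeCount (fits := fits) hS0 hS hS2 x (q + d)
    omega
  · exact Nat.le_of_mul_le_mul_right (ratio_le.trans (Nat.mul_le_mul_left _ free_le)) hpos

end TwoColumnWalks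

section HeightChains

variable {l ν : List ℕ} {g : ℕ → ℕ} {T : ℕ → ℕ → ℕ} {H : ℕ → ℕ → ℕ} {K W : ℕ}

/-- `g` is the sequence of column lengths of the diagram with row lengths `l`. -/
def IsConjugate (l : List ℕ) (g : ℕ → ℕ) : Prop := ∀ i j, i < g j ↔ j < l.getD i 0

/-- A chain of diagrams growing by horizontal strips from the empty one at time `0` to the one with
column lengths `g` at time `K`. The diagram at time `x` is given by its column lengths `H x`. -/
structure IsHeightChain (g : ℕ → ℕ) (K : ℕ) (H : ℕ → ℕ → ℕ) : Prop where
  zero : ∀ j, H 0 j = 0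
  le_succ : ∀ x j, H x j ≤ H (x + 1) j
  succ_le : ∀ x j, H (x + 1) j ≤ H x j + 1
  antitone : ∀ x, Antitone (H x)
  eq_of_le : ∀ x, K ≤ x → H x = g

/-- The height chains whose strip at time `x` has `ν.getD x 0` cells. The cells are counted in the
first `W` columns, which are meant to contain the whole diagram. -/
def heightChains (g : ℕ → ℕ) (ν : List ℕ) (W : ℕ) : Set (ℕ → ℕ → ℕ) :=
  {H | IsHeightChain g ν.length H ∧
    ∀ x, ∑ j ∈ range W, H (x + 1) j = ∑ j ∈ range W, H x j + ν.getD x 0}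

/-- `H x j` is the number of entries less than `x` in column `j` of a tableau `T` with column
lengths `g` and strictly increasing columns. -/
def Encodes (g : ℕ → ℕ) (T H : ℕ → ℕ → ℕ) : Prop := ∀ x i j, i < H x j ↔ i < g j ∧ T i j < x

/-- The chain of diagrams formed by the entries less than `x` of a tableau. -/
noncomputable def heightsOfTableau (g : ℕ → ℕ) (T : ℕ → ℕ → ℕ) (x j : ℕ) : ℕ :=
  sInf {i | g j ≤ i ∨ x ≤ T i j}

/-- The tableau recording when each cell is added in a chain of diagrams. Outside of the final
diagram the set is empty, and its infimum is `0`. -/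
noncomputable def tableauOfHeights (H : ℕ → ℕ → ℕ) (i j : ℕ) : ℕ := sInf {x | i < H (x + 1) j}

theorem lt_sInf_iff_notMem {S : Set ℕ} (hS : S.Nonempty) (hup : IsUpperSet S) {i : ℕ} :
    i < sInf S ↔ i ∉ S :=
  ⟨Nat.notMem_of_lt_sInf, fun hi ↦ lt_of_not_ge fun h ↦ hi (hup h (Nat.sInf_mem hS))⟩

theorem IsConjugate.eq_zero_of_le {j : ℕ} (hl : IsConjugate l g) (hj : l.getD 0 0 ≤ j) : g j = 0 :=
  Nat.eq_zero_of_not_pos fun hpos ↦ ((hl 0 j).1 hpos).not_ge hj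

theorem exists_isConjugate (hl : l.Pairwise (· ≥ ·)) : ∃ g, IsConjugate l g := by
  have rows_antitone {i i' : ℕ} (h : i ≤ i') : l.getD i' 0 ≤ l.getD i 0 := by
    rcases h.eq_or_lt with rfl | h
    · rfl
    rcases lt_or_ge i' l.length with hi' | hi'
    · simpa [List.getD_eq_getElem, hi', h.trans hi'] using
        List.pairwise_iff_getElem.1 hl i i' (h.trans hi') hi' h
    · simp [hi']
  exact ⟨fun j ↦ sInf {i | l.getD i 0 ≤ j}, fun i j ↦
    (lt_sInf_iff_notMem (S := {i | l.getD i 0 ≤ j}) ⟨l.length, by simp⟩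
      fun _ _ h hi ↦ (rows_antitone h).trans hi).trans (by rw [Set.mem_ofPred_eq, not_le])⟩

namespace IsHeightChain

variable (hH : IsHeightChain g K H)
include hH

theorem mono (j : ℕ) : Monotone fun x ↦ H x j := monotone_nat_of_le_succ fun x ↦ hH.le_succ x j

theorem le (x j : ℕ) : H x j ≤ g j := by
  rw [← hH.eq_of_le (max x K) (le_max_right x K)]
  exact hH.mono j (le_max_left x K)

theorem encodes_tableauOfHeights : Encodes g (tableauOfHeights H) H := by
  intro x i j
  have added_iff (hi : i < g j) (x : ℕ) : tableauOfHeights H i j ≤ x ↔ i < H (x + 1) j := by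
    have := lt_sInf_iff_notMem (S := {x | i < H (x + 1) j}) (i := x)
      ⟨K, by rwa [Set.mem_ofPred_eq, hH.eq_of_le _ K.le_succ]⟩
      fun y z hyz hy ↦ hy.trans_le (hH.mono j (Nat.succ_le_succ hyz))
    rw [← not_lt, tableauOfHeights, this, Set.mem_ofPred_eq, not_not]
  rcases x with _ | x
  · simp [hH.zero]
  · rw [Nat.lt_succ_iff]
    exact ⟨fun h ↦ ⟨h.trans_le (hH.le _ j), (added_iff (h.trans_le (hH.le _ j)) x).2 h⟩,
      fun h ↦ (added_iff h.1 x).1 h.2⟩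

theorem tableauOfHeights_eq_zero {i j : ℕ} (h : g j ≤ i) : tableauOfHeights H i j = 0 := by
  have : {x | i < H (x + 1) j} = ∅ :=
    Set.eq_empty_of_forall_notMem fun x hx ↦ (hx.trans_le (hH.le _ j)).not_ge h
  rw [tableauOfHeights, this, Nat.sInf_empty]

end IsHeightChain

theorem finite_heightChains (hW : ∀ j, W ≤ j → g j = 0) : (heightChains g ν W).Finite := by
  refine Set.Finite.of_injOn (f := fun H (x : Fin ν.length) (j : Fin W) ↦ H x j)
    (t := Set.Iic fun (_ : Fin ν.length) (j : Fin W) ↦ g j) (fun H hH x j ↦ hH.1.le x j)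
    (fun H hH H' hH' heq ↦ ?_) (Set.finite_Iic _)
  ext x j
  rcases le_or_gt ν.length x with hx | hx
  · rw [hH.1.eq_of_le x hx, hH'.1.eq_of_le x hx]
  rcases le_or_gt W j with hj | hj
  · have h := hH.1.le x j
    have h' := hH'.1.le x j
    rw [hW j hj, Nat.le_zero] at h h'
    rw [h, h']
  · exact congrFun (congrFun heq ⟨x, hx⟩) ⟨j, hj⟩

theorem encodes_heightsOfTableau (hT : ∀ i i' j, i < i' → i' < g j → T i j < T i' j) :
    Encodes g T (heightsOfTableau g T) := by
  intro x i j
  have upper : IsUpperSet {i | g j ≤ i ∨ x ≤ T i j} := by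
    rintro i i' hii' (hi | hi)
    · exact Or.inl (hi.trans hii')
    · rcases hii'.eq_or_lt with rfl | hlt
      · exact Or.inr hi
      · exact (le_or_gt (g j) i').imp_right fun h ↦ hi.trans (hT i i' j hlt h).le
  rw [heightsOfTableau, lt_sInf_iff_notMem ⟨g j, Or.inl le_rfl⟩ upper]
  simp only [Set.mem_ofPred_eq, not_or, not_le]

namespace Encodes

theorem heights_unique {H' : ℕ → ℕ → ℕ} (h : Encodes g T H) (h' : Encodes g T H') : H = H' := by
  ext x j
  exact eq_of_forall_lt_iff fun i ↦ (h x i j).trans (h' x i j).symm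

theorem tableau_unique {T' : ℕ → ℕ → ℕ} (h : Encodes g T H) (h' : Encodes g T' H)
    (hT : ∀ i j, g j ≤ i → T i j = 0) (hT' : ∀ i j, g j ≤ i → T' i j = 0) : T = T' := by
  ext i j
  rcases le_or_gt (g j) i with hi | hi
  · rw [hT i j hi, hT' i j hi]
  · exact eq_of_forall_gt_iff fun x ↦ by simpa [hi] using (h x i j).symm.trans (h' x i j)

theorem zero (h : Encodes g T H) (j : ℕ) : H 0 j = 0 :=
  Nat.le_zero.1 (le_of_forall_lt fun i hi ↦ absurd ((h 0 i j).1 hi).2 (Nat.not_lt_zero _))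

theorem le (h : Encodes g T H) (x j : ℕ) : H x j ≤ g j :=
  le_of_forall_lt fun i hi ↦ ((h x i j).1 hi).1

theorem le_succ (h : Encodes g T H) (x j : ℕ) : H x j ≤ H (x + 1) j :=
  le_of_forall_lt fun i hi ↦
    (h _ i j).2 (((h x i j).1 hi).imp_right fun hlt ↦ hlt.trans x.lt_succ_self)

theorem card_entries_eq (h : Encodes g T H) (hl : IsConjugate l g) (hW : ∀ j, W ≤ j → g j = 0)
    (k : ℕ) : Nat.card {c : ℕ × ℕ // c.2 < l.getD c.1 0 ∧ T c.1 c.2 = k} =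
      ∑ j ∈ range W, (H (k + 1) j - H k j) := by
  let cells : Finset (ℕ × ℕ) := ((range W).sigma fun j ↦ Ico (H k j) (H (k + 1) j)).map
    ((Equiv.sigmaEquivProd ℕ ℕ).trans (Equiv.prodComm ℕ ℕ)).toEmbedding
  have mem_cells (c : ℕ × ℕ) : c ∈ cells ↔ c.2 < l.getD c.1 0 ∧ T c.1 c.2 = k := by
    obtain ⟨i, j⟩ := c
    have j_lt_of_lt (hi : i < g j) : j < W := lt_of_not_ge fun hj ↦ by simp [hW j hj] at hi
    rw [mem_map_equiv, mem_sigma]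
    simp only [Equiv.symm_trans_apply, Equiv.prodComm_symm, Equiv.prodComm_apply, Prod.swap_prod_mk,
      Equiv.sigmaEquivProd_symm_apply, mem_range, mem_Ico, ← hl i j, ← not_lt, h _ i j]
    constructor
    · rintro ⟨-, h₁, h₂⟩
      exact ⟨h₂.1, by omega⟩
    · rintro ⟨hi, rfl⟩
      exact ⟨j_lt_of_lt hi, by omega, by omega⟩
  rw [Nat.subtype_card cells mem_cells, card_map, card_sigma]
  simp only [Nat.card_Ico]

theorem hasContent_iff (h : Encodes g T H) (hl : IsConjugate l g) (hW : ∀ j, W ≤ j → g j = 0) :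
    HasContent l T ν ↔
      ∀ x, ∑ j ∈ range W, H (x + 1) j = ∑ j ∈ range W, H x j + ν.getD x 0 := by
  refine forall_congr' fun x ↦ ?_
  have hle : ∑ j ∈ range W, H x j ≤ ∑ j ∈ range W, H (x + 1) j :=
    sum_le_sum fun j _ ↦ h.le_succ x j
  rw [h.card_entries_eq hl hW, sum_tsub_distrib _ fun j _ ↦ h.le_succ x j]
  omega

theorem eq_of_le (h : Encodes g T H) (hW : ∀ j, W ≤ j → g j = 0)
    (hsum : ∀ x, K ≤ x → ∑ j ∈ range W, H (x + 1) j = ∑ j ∈ range W, H x j) :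
    ∀ x, K ≤ x → H x = g := by
  have stable (x : ℕ) (hx : K ≤ x) (j : ℕ) : H (x + 1) j = H x j := by
    rcases lt_or_ge j W with hj | hj
    · have := (sum_eq_sum_iff_of_le fun j _ ↦ h.le_succ x j).1 (hsum x hx).symm
      exact (this j (mem_range.2 hj)).symm
    · have h₁ := h.le x j
      have h₂ := h.le (x + 1) j
      rw [hW j hj] at h₁ h₂
      omega
  have le_of_stable (x y j : ℕ) (hx : K ≤ x) : H y j ≤ H x j := by
    induction y with
    | zero => exact (h.zero j).trans_le (Nat.zero_le _)
    | succ y ih =>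
      rcases lt_or_ge y x with hy | hy
      · exact monotone_nat_of_le_succ (f := fun x ↦ H x j) (fun x ↦ h.le_succ x j) hy
      · exact (stable y (hx.trans hy) j).trans_le ih
  intro x hx
  ext j
  refine (h.le x j).antisymm (le_of_forall_lt fun i hi ↦ ?_)
  exact ((h _ i j).2 ⟨hi, (T i j).lt_succ_self⟩).trans_le (le_of_stable x _ j hx)

theorem mem_heightChains (h : Encodes g T H) (hl : IsConjugate l g) (hW : ∀ j, W ≤ j → g j = 0)
    (hT : IsSSYT l T) (hν : HasContent l T ν) : H ∈ heightChains g ν W := by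
  obtain ⟨hrow, hcol, -⟩ := hT
  have hsum := (h.hasContent_iff hl hW).1 hν
  refine ⟨⟨h.zero, h.le_succ, fun x j ↦ ?_, fun x j j' hjj' ↦ ?_, ?_⟩, hsum⟩
  · refine le_of_forall_lt fun i hi ↦ ?_
    rcases i with _ | i
    · exact Nat.succ_pos _
    obtain ⟨hi, hlt⟩ := (h _ _ j).1 hi
    have := hcol i (i + 1) j i.lt_succ_self ((hl _ j).1 hi)
    exact Nat.succ_lt_succ ((h x i j).2 ⟨(Nat.lt_succ_self i).trans hi, by omega⟩)
  · refine le_of_forall_lt fun i hi ↦ ?_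
    obtain ⟨hi, hlt⟩ := (h x i j').1 hi
    have hi' := (hl i j').1 hi
    exact (h x i j).2 ⟨(hl i j).2 (hjj'.trans_lt hi'), (hrow i j j' hjj' hi').trans_lt hlt⟩
  · exact h.eq_of_le hW fun x hx ↦ by simpa [List.getD_eq_default, hx] using hsum x

theorem isSSYT (h : Encodes g T H) (hl : IsConjugate l g) (hH : IsHeightChain g K H)
    (hT : ∀ i j, g j ≤ i → T i j = 0) : IsSSYT l T := by
  refine ⟨fun i j j' hjj' hj' ↦ ?_, fun i i' j hii' hj ↦ ?_, fun i j hj ↦ hT i j ?_⟩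
  · have added : i < H (T i j' + 1) j' := (h _ i j').2 ⟨(hl i j').2 hj', Nat.lt_succ_self _⟩
    exact Nat.lt_succ_iff.1 ((h _ i j).1 (added.trans_le (hH.antitone _ hjj'))).2
  · have added : i' < H (T i' j + 1) j := (h _ i' j).2 ⟨(hl i' j).2 hj, Nat.lt_succ_self _⟩
    exact ((h _ i j).1 (hii'.trans_le (Nat.lt_succ_iff.1 (added.trans_le (hH.succ_le _ j))))).2
  · rwa [← not_lt, hl, not_lt]

end Encodes

theorem kostka_eq_ncard_heightChains (hl : IsConjugate l g) (hW : ∀ j, W ≤ j → g j = 0) :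
    kostka l ν = (heightChains g ν W).ncard := by
  have encodes_heights {T : ℕ → ℕ → ℕ} (hT : IsSSYT l T) : Encodes g T (heightsOfTableau g T) :=
    encodes_heightsOfTableau fun i i' j hii' hi' ↦ hT.2.1 i i' j hii' ((hl i' j).1 hi')
  have eq_zero {T : ℕ → ℕ → ℕ} (hT : IsSSYT l T) (i j : ℕ) (hi : g j ≤ i) : T i j = 0 :=
    hT.2.2 i j (by rwa [← not_lt, ← hl, not_lt])
  have bijOn : Set.BijOn (heightsOfTableau g) {T | IsSSYT l T ∧ HasContent l T ν}
      (heightChains g ν W) := by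
    have tableau_isSSYT {H : ℕ → ℕ → ℕ} (hH : H ∈ heightChains g ν W) :
        IsSSYT l (tableauOfHeights H) :=
      hH.1.encodes_tableauOfHeights.isSSYT hl hH.1 fun i j ↦ hH.1.tableauOfHeights_eq_zero
    have maps {T : ℕ → ℕ → ℕ} (hT : IsSSYT l T ∧ HasContent l T ν) :
        heightsOfTableau g T ∈ heightChains g ν W :=
      (encodes_heights hT.1).mem_heightChains hl hW hT.1 hT.2
    refine Set.InvOn.bijOn (f' := tableauOfHeights) ⟨fun T hT ↦ ?_, fun H hH ↦ ?_⟩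
      (fun T ↦ maps) fun H hH ↦ ?_
    · exact (maps hT).1.encodes_tableauOfHeights.tableau_unique (encodes_heights hT.1)
        (eq_zero (tableau_isSSYT (maps hT))) (eq_zero hT.1)
    · exact (encodes_heights (tableau_isSSYT hH)).heights_unique hH.1.encodes_tableauOfHeights
    · exact ⟨tableau_isSSYT hH, (hH.1.encodes_tableauOfHeights.hasContent_iff hl hW).2 hH.2⟩
  rw [← bijOn.ncard_eq, ← Nat.card_coe_set_eq]
  rfl

end HeightChains

section MovingABox

variable {g g' h h' : ℕ → ℕ} {H H₀ : ℕ → ℕ → ℕ} {ν : List ℕ} {e a b x K W : ℕ}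

/-- The column lengths with columns `e` and `e + 1` combined into column `e`; what remains of a
diagram if the distribution of cells among these two columns is forgotten. -/
def mergePair (e : ℕ) (h : ℕ → ℕ) (j : ℕ) : ℕ :=
  if j = e then h e + h (e + 1) else if j = e + 1 then 0 else h j

/-- The column lengths obtained by giving `a` of the cells in columns `e` and `e + 1` to column `e`
and the other ones to column `e + 1`. -/
def splitPair (e : ℕ) (h : ℕ → ℕ) (a j : ℕ) : ℕ :=
  if j = e then a else if j = e + 1 then h e + h (e + 1) - a else h j

/-- In `splitPair e h a`, the two changed columns fit between the columns around them. -/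
def SplitFits (e : ℕ) (h : ℕ → ℕ) (a : ℕ) : Prop :=
  (∀ i, i + 1 = e → a ≤ h i) ∧ h (e + 2) + a ≤ h e + h (e + 1)

/-- The possible height functions of column `e`, ending at `b`, in chains that agree with `H₀`
except for the distribution of cells among columns `e` and `e + 1`. -/
def splitWalks (e : ℕ) (H₀ : ℕ → ℕ → ℕ) (K b : ℕ) : Set (ℕ → ℕ) :=
  walks (constrainedPreds (fun x ↦ H₀ x e + H₀ x (e + 1)) fun x ↦ SplitFits e (H₀ x)) 0 K b

/-- The column lengths after moving a cell from column `e` to column `e + 1`. -/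
def moveBox (e : ℕ) (g : ℕ → ℕ) : ℕ → ℕ := splitPair e g (g e - 1)

theorem splitPair_left : splitPair e h a e = a := if_pos rfl

theorem splitPair_right : splitPair e h a (e + 1) = h e + h (e + 1) - a := by
  rw [splitPair, if_neg e.succ_ne_self, if_pos rfl]

theorem splitPair_of_ne {j : ℕ} (hj : j ≠ e) (hj' : j ≠ e + 1) : splitPair e h a j = h j := by
  rw [splitPair, if_neg hj, if_neg hj']

theorem mergePair_eq_iff : mergePair e h = mergePair e h' ↔
    h e ≤ h' e + h' (e + 1) ∧ h = splitPair e h' (h e) := by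
  constructor
  · intro heq
    have hj := congrFun heq
    simp only [mergePair] at hj
    have he := hj e
    refine ⟨by grind, funext fun j ↦ ?_⟩
    have := hj j
    grind [splitPair]
  · rintro ⟨hle, heq⟩
    have hj := congrFun heq
    have he := hj (e + 1)
    rw [splitPair_right] at he
    ext j
    have := hj j
    grind [mergePair, splitPair]

theorem sum_mergePair (he : e + 2 ≤ W) :
    ∑ j ∈ range W, mergePair e h j = ∑ j ∈ range W, h j := by
  obtain ⟨m, rfl⟩ := Nat.exists_eq_add_of_le he
  have before : ∑ j ∈ range e, mergePair e h j = ∑ j ∈ range e, h j :=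
    sum_congr rfl fun j hj ↦ by grind [mergePair]
  have after : ∑ j ∈ range m, mergePair e h (e + 2 + j) = ∑ j ∈ range m, h (e + 2 + j) :=
    sum_congr rfl fun j _ ↦ by grind [mergePair]
  have left : mergePair e h e = h e + h (e + 1) := if_pos rfl
  have right : mergePair e h (e + 1) = 0 := by simp [mergePair]
  simp only [sum_range_add, sum_range_succ, before, after, left, right]
  omega

theorem antitone_splitPair_iff (hh : Antitone h) (ha : a ≤ h e + h (e + 1)) :
    Antitone (splitPair e h a) ↔ h e + h (e + 1) ≤ 2 * a ∧ SplitFits e h a := by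
  constructor
  · intro hanti
    have h₁ := hanti (Nat.le_add_right e 1)
    have h₂ := hanti (show e + 1 ≤ e + 2 by omega)
    rw [splitPair_left, splitPair_right] at h₁
    rw [splitPair_right, splitPair_of_ne (by omega) (by omega)] at h₂
    refine ⟨by omega, ?_, by omega⟩
    rintro i rfl
    have h₃ := hanti (Nat.le_add_right i 1)
    rwa [splitPair_left, splitPair_of_ne (by omega) (by omega)] at h₃
  · rintro ⟨hle, hprev, hnext⟩
    refine antitone_nat_of_succ_le fun j ↦ ?_
    have := hh (Nat.le_add_right j 1)
    have := hprev j
    grind [splitPair]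

theorem mem_splitWalks_of_isHeightChain {f : ℕ → ℕ} (hH₀ : IsHeightChain g K H₀)
    (hf : ∀ x, f x ≤ H₀ x e + H₀ x (e + 1))
    (hH : IsHeightChain g' K fun x ↦ splitPair e (H₀ x) (f x)) :
    f ∈ splitWalks e H₀ K (g' e) := by
  refine ⟨?_, fun x _ ↦ ?_, fun x hx ↦ ?_⟩
  · simpa [splitPair_left] using hH.zero e
  · refine mem_constrainedPreds.2
      ⟨(antitone_splitPair_iff (hH₀.antitone _) (hf _)).1 (hH.antitone _), mem_columnPreds.2 ?_⟩
    have h₁ := hH.le_succ x e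
    have h₂ := hH.succ_le x e
    have h₃ := hH.le_succ x (e + 1)
    have h₄ := hH.succ_le x (e + 1)
    simp only [splitPair_left, splitPair_right] at h₁ h₂ h₃ h₄
    have := hf x
    have := hf (x + 1)
    omega
  · rw [← hH.eq_of_le x hx, splitPair_left]

theorem splitWalks_step {f : ℕ → ℕ} (hH₀ : IsHeightChain g K H₀) (hf : f ∈ splitWalks e H₀ K b)
    (x : ℕ) : f x ∈ columnPreds (fun x ↦ H₀ x e + H₀ x (e + 1)) x (f (x + 1)) := by
  obtain ⟨-, hstep, hend⟩ := hf
  rcases lt_or_ge x K with hx | hx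
  · exact (mem_constrainedPreds.1 (hstep x hx)).2
  · rw [mem_columnPreds, hend x hx, hend (x + 1) (by omega), hH₀.eq_of_le x hx,
      hH₀.eq_of_le (x + 1) (by omega)]
    omega

theorem splitWalks_fits {f : ℕ → ℕ} (hH₀ : IsHeightChain g K H₀) (hf : f ∈ splitWalks e H₀ K b)
    (x : ℕ) : H₀ x e + H₀ x (e + 1) ≤ 2 * f x ∧ SplitFits e (H₀ x) (f x) := by
  obtain ⟨hzero, hstep, hend⟩ := hf
  induction x with
  | zero => simp [SplitFits, hH₀.zero, hzero]
  | succ x ih =>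
    rcases lt_or_ge x K with hx | hx
    · exact (mem_constrainedPreds.1 (hstep x hx)).1
    · rwa [hend (x + 1) (by omega), ← hend x hx, hH₀.eq_of_le (x + 1) (by omega),
        ← hH₀.eq_of_le x hx]

theorem splitWalks_le {f : ℕ → ℕ} (hH₀ : IsHeightChain g K H₀) (hf : f ∈ splitWalks e H₀ K b)
    (x : ℕ) : f x ≤ H₀ x e + H₀ x (e + 1) := by
  induction x with
  | zero => simp [hf.1]
  | succ x ih =>
    have := mem_columnPreds.1 (splitWalks_step hH₀ hf x)
    omega

theorem isHeightChain_splitPair {f : ℕ → ℕ} (hH₀ : IsHeightChain g K H₀)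
    (hg : mergePair e g' = mergePair e g) (hf : f ∈ splitWalks e H₀ K (g' e)) :
    IsHeightChain g' K fun x ↦ splitPair e (H₀ x) (f x) := by
  have hle := splitWalks_le hH₀ hf
  have hstep (x : ℕ) := mem_columnPreds.1 (splitWalks_step hH₀ hf x)
  refine ⟨fun j ↦ ?_, fun x j ↦ ?_, fun x j ↦ ?_, fun x ↦ ?_, fun x hx ↦ ?_⟩
  · simp [splitPair, hH₀.zero, hf.1]
  · have := hstep x
    have := hH₀.le_succ x j
    grind [splitPair]
  · have := hstep x
    have := hH₀.succ_le x j
    grind [splitPair]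
  · exact (antitone_splitPair_iff (hH₀.antitone x) (hle x)).2 (splitWalks_fits hH₀ hf x)
  · rw [hH₀.eq_of_le x hx, hf.2.2 x hx]
    exact (mergePair_eq_iff.1 hg).2.symm

theorem ncard_fiber_eq_ncard_splitWalks (he : e + 2 ≤ W) (hH₀ : H₀ ∈ heightChains g ν W)
    (hg : mergePair e g' = mergePair e g) :
    {H ∈ heightChains g' ν W | (fun x ↦ mergePair e (H x)) = fun x ↦ mergePair e (H₀ x)}.ncard =
      (splitWalks e H₀ ν.length (g' e)).ncard := by
  have fiber_eq {H : ℕ → ℕ → ℕ}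
      (h : (fun x ↦ mergePair e (H x)) = fun x ↦ mergePair e (H₀ x)) (x : ℕ) :=
    mergePair_eq_iff.1 (congrFun h x)
  refine Set.BijOn.ncard_eq (f := fun H x ↦ H x e) <| Set.InvOn.bijOn
    (f' := fun f x ↦ splitPair e (H₀ x) (f x)) ⟨?_, ?_⟩ ?_ ?_
  · rintro H ⟨-, h⟩
    exact funext fun x ↦ (fiber_eq h x).2.symm
  · exact fun f _ ↦ funext fun x ↦ splitPair_left
  · rintro H ⟨hH, h⟩
    refine mem_splitWalks_of_isHeightChain hH₀.1 (fun x ↦ (fiber_eq h x).1) ?_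
    rw [← funext fun x ↦ (fiber_eq h x).2]
    exact hH.1
  · intro f hf
    have merge_eq (x : ℕ) : mergePair e (splitPair e (H₀ x) (f x)) = mergePair e (H₀ x) :=
      mergePair_eq_iff.2 (by rw [splitPair_left]; exact ⟨splitWalks_le hH₀.1 hf x, rfl⟩)
    have sum_eq (x : ℕ) :
        ∑ j ∈ range W, splitPair e (H₀ x) (f x) j = ∑ j ∈ range W, H₀ x j := by
      rw [← sum_mergePair he, merge_eq, sum_mergePair he]
    refine ⟨⟨isHeightChain_splitPair hH₀.1 hg hf, fun x ↦ ?_⟩, funext merge_eq⟩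
    rw [sum_eq, sum_eq, hH₀.2 x]

theorem ncard_splitWalks_le_pred (hH₀ : IsHeightChain g K H₀)
    (hg : 2 * (g (e + 1) + 1) ≤ (g e - g (e + 1)) * (g e - g (e + 1) - 1)) :
    (splitWalks e H₀ K (g e)).ncard ≤ (splitWalks e H₀ K (g e - 1)).ncard := by
  have hle : g (e + 1) ≤ g e := by
    rw [← hH₀.eq_of_le K le_rfl]
    exact hH₀.antitone K e.le_succ
  have := constrainedCount_le_pred (S := fun x ↦ H₀ x e + H₀ x (e + 1))
    (fits := fun x ↦ SplitFits e (H₀ x)) (x := K) (q := g (e + 1)) (d := g e - g (e + 1))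
    (by simp [hH₀.zero]) (fun x y hxy ↦ Nat.add_le_add (hH₀.mono e hxy) (hH₀.mono (e + 1) hxy))
    (fun x ↦ by have := hH₀.succ_le x e; have := hH₀.succ_le x (e + 1); omega)
    (fun x i j hij hj ↦ ⟨fun k hk ↦ hij.trans (hj.1 k hk),
      (Nat.add_le_add_left hij _).trans hj.2⟩)
    (by rw [hH₀.eq_of_le K le_rfl]; omega) hg
  rwa [Nat.add_sub_cancel' hle] at this

theorem moveBox_eq_zero {j : ℕ} (he : e + 2 ≤ W) (hW : ∀ j, W ≤ j → g j = 0) (hj : W ≤ j) :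
    moveBox e g j = 0 := by
  rw [moveBox, splitPair_of_ne (by omega) (by omega), hW j hj]

theorem ncard_heightChains_le_moveBox (he : e + 2 ≤ W) (hW : ∀ j, W ≤ j → g j = 0)
    (hg : 2 * (g (e + 1) + 1) ≤ (g e - g (e + 1)) * (g e - g (e + 1) - 1)) :
    (heightChains g ν W).ncard ≤ (heightChains (moveBox e g) ν W).ncard := by
  have merge_moveBox : mergePair e (moveBox e g) = mergePair e g :=
    mergePair_eq_iff.2 (by rw [moveBox, splitPair_left]; exact ⟨by omega, rfl⟩)
  refine ncard_le_ncard_of_fiberwise (finite_heightChains hW)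
    (finite_heightChains fun _ ↦ moveBox_eq_zero he hW) (fun H x ↦ mergePair e (H x))
    fun H₀ hH₀ ↦ ?_
  rw [ncard_fiber_eq_ncard_splitWalks he hH₀ rfl,
    ncard_fiber_eq_ncard_splitWalks he hH₀ merge_moveBox, moveBox, splitPair_left]
  exact ncard_splitWalks_le_pred hH₀.1 hg

theorem kostka_le_of_isConjugate_moveBox {l m : List ℕ} (hl : IsConjugate l g)
    (hm : IsConjugate m (moveBox e g))
    (hg : 2 * (g (e + 1) + 1) ≤ (g e - g (e + 1)) * (g e - g (e + 1) - 1)) :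
    kostka l ν ≤ kostka m ν := by
  let W := l.getD 0 0 + e + 2
  have he : e + 2 ≤ W := by omega
  have hW (j : ℕ) (hj : W ≤ j) : g j = 0 := hl.eq_zero_of_le (by omega)
  rw [kostka_eq_ncard_heightChains hl hW,
    kostka_eq_ncard_heightChains hm fun _ ↦ moveBox_eq_zero he hW]
  exact ncard_heightChains_le_moveBox he hW hg

end MovingABox

section RowLengths

variable {pre suf l m : List ℕ} {g : ℕ → ℕ} {c e β i : ℕ}

theorem getD_filter_ne_zero (hl : l.Pairwise (· ≥ ·)) (i : ℕ) :
    (l.filter fun x ↦ x ≠ 0).getD i 0 = l.getD i 0 := by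
  induction l generalizing i with
  | nil => rfl
  | cons a l ih =>
    obtain ⟨ha, hl'⟩ := List.pairwise_cons.1 hl
    rcases eq_or_ne a 0 with rfl | ha0
    · rw [List.filter_cons_of_neg (by simp), ih hl',
        List.eq_replicate_of_mem fun x hx ↦ Nat.le_zero.1 (ha x hx)]
      cases i <;> grind
    · rw [List.filter_cons_of_pos (by simpa using ha0)]
      cases i with
      | zero => rfl
      | succ i => exact ih hl' i

theorem lt_getD_prefix (hpre : ∀ x ∈ pre, c < x) (hi : i < pre.length) :
    c < (pre ++ List.replicate β c ++ suf).getD i 0 := by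
  have := hpre _ (List.getElem_mem hi)
  grind

theorem getD_block (hi : pre.length ≤ i) (hi' : i < pre.length + β) :
    (pre ++ List.replicate β c ++ suf).getD i 0 = c := by
  grind

theorem getD_suffix_lt (hc : 0 < c) (hsuf : ∀ x ∈ suf, x < c) (hi : pre.length + β ≤ i) :
    (pre ++ List.replicate β c ++ suf).getD i 0 < c := by
  grind [List.getElem_mem]

theorem getD_append_congr (h : ∀ i, l.getD i 0 = m.getD i 0) (i : ℕ) :
    (pre ++ l).getD i 0 = (pre ++ m).getD i 0 := by
  rcases lt_or_ge i pre.length with hi | hi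
  · rw [List.getD_append _ _ _ _ hi, List.getD_append _ _ _ _ hi]
  · rw [List.getD_append_right _ _ _ _ hi, List.getD_append_right _ _ _ _ hi, h]

theorem getD_movedShape (hβ : 2 ≤ β) (hsuf : ∀ x ∈ suf, x < c)
    (hl : suf.Pairwise (· ≥ ·)) (i : ℕ) :
    (movedShape c β pre suf).getD i 0 = if i = pre.length then c + 1 else
      if i = pre.length + β - 1 then c - 1 else (pre ++ List.replicate β c ++ suf).getD i 0 := by
  have sorted : ((c - 1) :: suf).Pairwise (· ≥ ·) :=
    List.pairwise_cons.2 ⟨fun x hx ↦ Nat.le_sub_one_of_lt (hsuf x hx), hl⟩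
  have unfiltered : (movedShape c β pre suf).getD i 0 =
      (pre ++ (c + 1) :: List.replicate (β - 2) c ++ (c - 1) :: suf).getD i 0 := by
    rw [← getD_append_congr (getD_filter_ne_zero sorted), List.append_assoc, List.cons_append,
      movedShape]
  have block_eq : pre ++ List.replicate β c ++ suf =
      pre ++ c :: List.replicate (β - 2) c ++ c :: suf := by
    obtain ⟨b, rfl⟩ := Nat.exists_eq_add_of_le' hβ
    rw [List.replicate_succ, List.replicate_succ']
    simp
  rw [unfiltered, block_eq]
  grind

theorem isConjugate_moveBox (hl : IsConjugate l g) (he : g (e + 1) + 2 ≤ g e)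
    (hm : ∀ i, m.getD i 0 =
      if i = g (e + 1) then e + 2 else if i = g e - 1 then e else l.getD i 0) :
    IsConjugate m (moveBox e g) := by
  intro i j
  have row_eq (h₁ : g (e + 1) ≤ i) (h₂ : i < g e) : l.getD i 0 = e + 1 := by
    have := hl i e
    have := hl i (e + 1)
    omega
  have := hl i j
  rw [hm, moveBox, splitPair]
  grind

theorem IsConjugate.apply_eq_length_prefix (hc : 0 < c) (hpre : ∀ x ∈ pre, c < x)
    (hsuf : ∀ x ∈ suf, x < c) (hl : IsConjugate (pre ++ List.replicate β c ++ suf) g) :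
    g c = pre.length := by
  refine eq_of_forall_lt_iff fun i ↦ (hl i c).trans ⟨fun h ↦ ?_, lt_getD_prefix hpre⟩
  by_contra hi
  rcases lt_or_ge i (pre.length + β) with hi' | hi'
  · exact h.ne' (getD_block (not_lt.1 hi) hi')
  · exact h.asymm (getD_suffix_lt hc hsuf hi')

theorem IsConjugate.apply_pred_eq_length_prefix_add (hc : 0 < c) (hpre : ∀ x ∈ pre, c < x)
    (hsuf : ∀ x ∈ suf, x < c) (hl : IsConjugate (pre ++ List.replicate β c ++ suf) g) :
    g (c - 1) = pre.length + β := by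
  refine eq_of_forall_lt_iff fun i ↦ (hl i (c - 1)).trans ⟨fun h ↦ ?_, fun hi ↦ ?_⟩
  · by_contra hi
    have := getD_suffix_lt hc hsuf (not_lt.1 hi)
    omega
  · refine (Nat.sub_one_lt_of_lt hc).trans_le ?_
    rcases lt_or_ge i pre.length with hi' | hi'
    · exact (lt_getD_prefix hpre hi').le
    · exact (getD_block hi' hi).ge

end RowLengths

theorem kostka_le_of_moved_box_two_general (n c β : ℕ) (pre suf ν : List ℕ)
    (hβ : 2 * (pre.length + 1) ≤ β * (β - 1))
    (hpre : ∀ x ∈ pre, c < x) (hsuf : ∀ x ∈ suf, x < c)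
    (hlam : IsPartitionOf n (pre ++ List.replicate β c ++ suf)) :
    kostka (pre ++ List.replicate β c ++ suf) ν ≤ kostka (movedShape c β pre suf) ν := by
  have hβ2 : 2 ≤ β := by rcases β with _ | _ | β <;> omega
  obtain ⟨e, rfl⟩ : ∃ e, c = e + 1 :=
    Nat.exists_eq_succ_of_ne_zero (hlam.2.1 c (by simp; omega)).ne'
  obtain ⟨g, hg⟩ := exists_isConjugate hlam.1
  have hge : g (e + 1) = pre.length := hg.apply_eq_length_prefix e.succ_pos hpre hsuf
  have hge' : g e = pre.length + β := hg.apply_pred_eq_length_prefix_add e.succ_pos hpre hsuf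
  have hg' : IsConjugate (movedShape (e + 1) β pre suf) (moveBox e g) := by
    refine isConjugate_moveBox hg (by omega) fun i ↦ ?_
    rw [getD_movedShape hβ2 hsuf (List.pairwise_append.1 hlam.1).2.1, hge, hge']
    rfl
  exact kostka_le_of_isConjugate_moveBox hg hg' (by rwa [hge, hge', Nat.add_sub_cancel_left])

/-- Same as Statement 9, but with `β = α` and `α ≥ 4`. -/
theorem kostka_le_of_moved_box_two (n c α β : ℕ) (pre suf : List ℕ) (hc : 1 ≤ c)
    (hα : pre.length = α) (hα4 : 4 ≤ α) (hβ : β = α)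
    (hpre : ∀ x ∈ pre, c < x) (hsuf : ∀ x ∈ suf, x < c)
    (hlam : IsPartitionOf n (pre ++ List.replicate β c ++ suf)) :
    (∀ ν, IsPartitionOf n ν →
        kostka (pre ++ List.replicate β c ++ suf) ν ≤ kostka (movedShape c β pre suf) ν) ∧
      ImmersionLE n (pre ++ List.replicate β c ++ suf) (movedShape c β pre suf) := by
  have hlen : 2 * (pre.length + 1) ≤ β * (β - 1) := by
    obtain ⟨k, rfl⟩ := Nat.exists_eq_add_of_le' hα4
    rw [hα, hβ, show k + 4 - 1 = k + 3 from rfl]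
    nlinarith
  have h (ν : List ℕ) := kostka_le_of_moved_box_two_general n c β pre suf ν hlen hpre hsuf hlam
  exact ⟨fun ν _ ↦ h ν, fun ν _ ↦ h ν⟩
end
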